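/- arXiv:2007.15725 — 6 statements merged into one kernel-verified Lean document; each statement's English description precedes it below -/
import Mathlib

section
/- Suppose the family S = {S_i}_{i∈I} is closed under nonempty intersection. Then for each δ̄ ∈ Δ^{l,u} there exist a subset I* ⊆ I and pairwise disjoint subsets J_0 and {J_i : i ∈ I*} of J such that the convex hull of X^{l,u}(δ̄) equals the set of all z ∈ R^n satisfying: z_j = 0 for all j ∈ J_0; Σ_{j∈J_i} z_j ≥ 1 for all i ∈ I*; l ≤ Σ_{j∈J} z_j ≤ u; and 0 ≤ z_j ≤ 1 for all j ∈ J. -/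
open Finset

noncomputable section

def Xset (n m l u : ℕ) (S : Fin m → Finset (Fin n)) : Set ((Fin n → ℝ) × (Fin m → ℝ)) :=
  {zd | (∀ j, zd.1 j = 0 ∨ zd.1 j = 1) ∧ (∀ i, zd.2 i = 0 ∨ zd.2 i = 1) ∧
        (∀ i, zd.2 i = ∏ j ∈ S i, (1 - zd.1 j)) ∧
        (l : ℝ) ≤ ∑ j, zd.1 j ∧ ∑ j, zd.1 j ≤ (u : ℝ)}

def Dset (n m l u : ℕ) (S : Fin m → Finset (Fin n)) : Set (Fin m → ℝ) :=
  Prod.snd '' Xset n m l u S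

def Xfiber (n m l u : ℕ) (S : Fin m → Finset (Fin n)) (δ : Fin m → ℝ) :
    Set (Fin n → ℝ) :=
  {z | (z, δ) ∈ Xset n m l u S}

/-- The family is closed under nonempty intersection. -/
def ClosedInter (n m : ℕ) (S : Fin m → Finset (Fin n)) : Prop :=
  ∀ i j : Fin m, (S i ∩ S j).Nonempty → ∃ k, S i ∩ S j = S k

/-- The family is proper. -/
def ProperFam (n m l u : ℕ) (S : Fin m → Finset (Fin n)) : Prop :=
  ClosedInter n m S ∧
  ∃ D : Finset (Fin m → ℝ), (D : Set (Fin m → ℝ)) = Dset n m l u S ∧ D.card = m + 1 ∧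
    AffineIndependent ℝ (Subtype.val : {x : Fin m → ℝ // x ∈ D} → (Fin m → ℝ))

/-- `f x ≤ c` is valid and defines a facet of `conv P`. -/
def IsFacet {E : Type*} [AddCommGroup E] [Module ℝ E] (P : Set E) (f : E → ℝ) (c : ℝ) :
    Prop :=
  (∀ x ∈ P, f x ≤ c) ∧
  Module.finrank ℝ (affineSpan ℝ {x ∈ convexHull ℝ P | f x = c}).direction + 1 =
    Module.finrank ℝ (affineSpan ℝ P).direction

def SS (n m : ℕ) (S : Fin m → Finset (Fin n)) : ℕ → Finset (Fin n) :=
  fun k => if h : 1 ≤ k ∧ k ≤ m then S ⟨k - 1, by omega⟩ else if k = 0 then ∅ else Finset.univ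

def dd (m : ℕ) (δ : Fin m → ℝ) : ℕ → ℝ :=
  fun k => if h : 1 ≤ k ∧ k ≤ m then δ ⟨k - 1, by omega⟩ else if k = 0 then 1 else 0

def mixLeLHS (n m u : ℕ) (S : Fin m → Finset (Fin n)) (p : ℕ) (S' : Finset (Fin n))
    (zd : (Fin n → ℝ) × (Fin m → ℝ)) : ℝ :=
  ∑ j ∈ S', zd.1 j + ((u : ℝ) - ((S' \ SS n m S p).card : ℝ)) * dd m zd.2 p
    + ∑ i ∈ Finset.Icc (p + 1) m,
        (((S' \ SS n m S (i - 1)).card : ℝ) - ((S' \ SS n m S i).card : ℝ)) * dd m zd.2 i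

def MixLe (n m u : ℕ) (S : Fin m → Finset (Fin n)) (p : ℕ) (S' : Finset (Fin n))
    (zd : (Fin n → ℝ) × (Fin m → ℝ)) : Prop :=
  mixLeLHS n m u S p S' zd ≤ (u : ℝ)

def mixGeLHS (n m l : ℕ) (S : Fin m → Finset (Fin n)) (p : ℕ) (S' : Finset (Fin n))
    (zd : (Fin n → ℝ) × (Fin m → ℝ)) : ℝ :=
  (((S' ∪ SS n m S p).card : ℝ) - (n : ℝ) + (l : ℝ)) * dd m zd.2 p
    + ∑ i ∈ Finset.Icc (p + 1) m,
        (((S' ∪ SS n m S i).card : ℝ) - ((S' ∪ SS n m S (i - 1)).card : ℝ)) * dd m zd.2 i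
    - ∑ j ∈ S', zd.1 j

def MixGe (n m l : ℕ) (S : Fin m → Finset (Fin n)) (p : ℕ) (S' : Finset (Fin n))
    (zd : (Fin n → ℝ) × (Fin m → ℝ)) : Prop :=
  mixGeLHS n m l S p S' zd ≤ 0

def NestedLin (n m l u : ℕ) (S : Fin m → Finset (Fin n))
    (zd : (Fin n → ℝ) × (Fin m → ℝ)) : Prop :=
  ((l : ℝ) ≤ ∑ j, zd.1 j) ∧ (∑ j, zd.1 j ≤ (u : ℝ)) ∧
  (∀ i : Fin m, ∀ j ∈ S i, zd.1 j + zd.2 i ≤ 1) ∧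
  (1 ≤ dd m zd.2 1 + ∑ j ∈ SS n m S 1, zd.1 j) ∧
  (0 ≤ dd m zd.2 m) ∧
  (∀ j, 0 ≤ zd.1 j) ∧
  (∀ j, j ∉ SS n m S m → zd.1 j ≤ 1) ∧
  (∀ i : ℕ, 1 ≤ i → i + 1 ≤ m → dd m zd.2 (i + 1) ≤ dd m zd.2 i) ∧
  (∀ i : ℕ, 1 ≤ i → i + 1 ≤ m →
    dd m zd.2 i - dd m zd.2 (i + 1) ≤ ∑ j ∈ SS n m S (i + 1) \ SS n m S i, zd.1 j)

def FollowsPattern (n : ℕ) (α α' : Fin n → ℝ) : Prop :=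
  (∀ j, (0 ≤ α j → 0 ≤ α' j) ∧ (α j ≤ 0 → α' j ≤ 0)) ∧
  (∀ j₁ j₂ : Fin n, α j₂ ≤ α j₁ → α' j₂ ≤ α' j₁)

def IsFacetSet {E : Type*} [AddCommGroup E] [Module ℝ E] (P : Set E) (F : Set E) : Prop :=
  ∃ (f : E →ₗ[ℝ] ℝ) (c : ℝ), (∀ x ∈ P, f x ≤ c) ∧
    F = {x ∈ convexHull ℝ P | f x = c} ∧
    Module.finrank ℝ (affineSpan ℝ F).direction + 1 =
      Module.finrank ℝ (affineSpan ℝ P).direction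

def PP {m : ℕ} (n l u : ℕ) (I : Finset (Fin m)) (J0 : Finset (Fin n)) (Jf : Fin m → Finset (Fin n)) :
    Set (Fin n → ℝ) :=
  {z : Fin n → ℝ |
          (∀ j ∈ J0, z j = 0) ∧
          (∀ i ∈ I, 1 ≤ ∑ j ∈ Jf i, z j) ∧
          ((l : ℝ) ≤ ∑ j, z j ∧ ∑ j, z j ≤ (u : ℝ)) ∧
          (∀ j, 0 ≤ z j ∧ z j ≤ 1)}

lemma int_sum {n : ℕ} (A : Finset (Fin n)) (z : Fin n → ℝ) (h : ∀ j ∈ A, z j = 0 ∨ z j = 1) :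
    ∃ k : ℤ, ∑ j ∈ A, z j = k := by
  refine ⟨∑ j ∈ A, if z j = 0 then 0 else 1, ?_⟩
  push_cast
  refine Finset.sum_congr rfl fun j hj => ?_
  rcases h j hj with h | h <;> simp [h]

lemma exists_other {n : ℕ} (A : Finset (Fin n)) (z : Fin n → ℝ) (hz : ∀ j, 0 ≤ z j ∧ z j ≤ 1)
    (k : ℤ) (hk : ∑ j ∈ A, z j = k) (j : Fin n) (hj : j ∈ A) (h0 : z j ≠ 0) (h1 : z j ≠ 1) :
    ∃ j' ∈ A, j' ≠ j ∧ z j' ≠ 0 ∧ z j' ≠ 1 := by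
  by_contra hcon
  push Not at hcon
  obtain ⟨k', hk'⟩ := int_sum (A.erase j) z (fun x hx => by
    rw [Finset.mem_erase] at hx
    by_cases hx0 : z x = 0
    · exact Or.inl hx0
    · exact Or.inr (hcon x hx.2 hx.1 hx0))
  rw [← Finset.add_sum_erase A z hj, hk'] at hk
  have e : z j = ((k - k' : ℤ) : ℝ) := by push_cast; linarith
  have a0 : 0 < z j := lt_of_le_of_ne (hz j).1 (Ne.symm h0)
  have a1 : z j < 1 := lt_of_le_of_ne (hz j).2 h1
  rw [e] at a0 a1
  have b0 : 0 < k - k' := by exact_mod_cast a0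
  have b1 : k - k' < 1 := by exact_mod_cast a1
  omega

lemma ev_le (a b c : ℝ) (h : a ≤ b) (ht : a = b → c = 0) :
    ∀ᶠ ε in nhds (0 : ℝ), a ≤ b + ε * c := by
  rcases h.eq_or_lt with h | h
  · simp [ht h, h]
  · have : Filter.Tendsto (fun ε : ℝ => b + ε * c) (nhds 0) (nhds b) := by
      have h2 : Continuous (fun ε : ℝ => b + ε * c) := by fun_prop
      simpa using h2.tendsto 0
    filter_upwards [this.eventually (lt_mem_nhds h)] with ε hε using hε.le

lemma ev_ge (a b c : ℝ) (h : b ≤ a) (ht : b = a → c = 0) :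
    ∀ᶠ ε in nhds (0 : ℝ), b + ε * c ≤ a := by
  filter_upwards [ev_le (-a) (-b) (-c) (by linarith) (fun h => by
    rw [ht (by linarith)]; simp)] with ε hε
  linarith

lemma not_ext {n m l u : ℕ} (I : Finset (Fin m)) (J0 : Finset (Fin n))
    (Jf : Fin m → Finset (Fin n)) (z d : Fin n → ℝ)
    (hz : z ∈ PP n l u I J0 Jf) (hd : d ≠ 0) (hd0 : ∀ j, z j = 0 ∨ z j = 1 → d j = 0)
    (hdI : ∀ i ∈ I, 1 = ∑ j ∈ Jf i, z j → ∑ j ∈ Jf i, d j = 0)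
    (hdl : (∃ k : ℤ, ∑ j, z j = k) → ∑ j, d j = 0) :
    z ∉ Set.extremePoints ℝ (PP n l u I J0 Jf) := by
  obtain ⟨z1, z2, ⟨z3, z4⟩, z5⟩ := hz
  have key : ∀ᶠ ε in nhds (0 : ℝ), z + ε • d ∈ PP n l u I J0 Jf := by
    have e2 : ∀ᶠ ε in nhds (0 : ℝ), ∀ i ∈ I, 1 ≤ ∑ j ∈ Jf i, z j + ε * ∑ j ∈ Jf i, d j := by
      rw [Filter.eventually_all_finset]
      exact fun i hi => ev_le _ _ _ (z2 i hi) (hdI i hi)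
    have e3 := ev_le _ _ (∑ j, d j) z3 (fun h => hdl ⟨l, by simp [← h]⟩)
    have e4 := ev_ge _ _ (∑ j, d j) z4 (fun h => hdl ⟨u, by simp [h]⟩)
    have e5 : ∀ᶠ ε in nhds (0 : ℝ), ∀ j, 0 ≤ z j + ε * d j := by
      rw [Filter.eventually_all]
      exact fun j => ev_le _ _ _ (z5 j).1 (fun h => hd0 j (Or.inl h.symm))
    have e6 : ∀ᶠ ε in nhds (0 : ℝ), ∀ j, z j + ε * d j ≤ 1 := by
      rw [Filter.eventually_all]
      exact fun j => ev_ge _ _ _ (z5 j).2 (fun h => hd0 j (Or.inr h))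
    filter_upwards [e2, e3, e4, e5, e6] with ε h2 h3 h4 h5 h6
    refine ⟨fun j hj => ?_, fun i hi => ?_, ⟨?_, ?_⟩, fun j => ⟨?_, ?_⟩⟩
    · simp [z1 j hj, hd0 j (Or.inl (z1 j hj))]
    · simpa [Finset.sum_add_distrib, Finset.mul_sum] using h2 i hi
    · simpa [Finset.sum_add_distrib, Finset.mul_sum] using h3
    · simpa [Finset.sum_add_distrib, Finset.mul_sum] using h4
    · simpa using h5 j
    · simpa using h6 j
  have key2 : ∀ᶠ ε in nhds (0 : ℝ), z + (-ε) • d ∈ PP n l u I J0 Jf := by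
    have : Filter.Tendsto (fun ε : ℝ => -ε) (nhds 0) (nhds 0) := by
      simpa using (continuous_neg.tendsto (0 : ℝ))
    exact this.eventually key
  have key3 : ∀ᶠ ε in nhdsWithin (0 : ℝ) (Set.Ioi 0), 0 < ε := self_mem_nhdsWithin
  obtain ⟨ε, ⟨p1, p2⟩, p3⟩ :=
    (((key.and key2).filter_mono nhdsWithin_le_nhds).and key3).exists
  intro hext
  have := hext.2 p1 p2 ⟨1/2, 1/2, by norm_num, by norm_num, by norm_num, by
    ext j; simp; ring⟩
  apply hd
  have h : ε • d = 0 := by simpa using this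
  exact (smul_eq_zero.mp h).resolve_left p3.ne'

lemma ext_int {n m l u : ℕ} (I : Finset (Fin m)) (J0 : Finset (Fin n))
    (Jf : Fin m → Finset (Fin n))
    (hdis : ∀ i ∈ I, ∀ i' ∈ I, i ≠ i' → Disjoint (Jf i) (Jf i'))
    (z : Fin n → ℝ) (hext : z ∈ Set.extremePoints ℝ (PP n l u I J0 Jf)) (j : Fin n) :
    z j = 0 ∨ z j = 1 := by
  have hz := hext.1
  obtain ⟨z1, z2, ⟨z3, z4⟩, z5⟩ := id hz
  by_contra hj
  push Not at hj
  -- difference directions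
  have diff : ∀ a b : Fin n, a ≠ b → z a ≠ 0 → z a ≠ 1 → z b ≠ 0 → z b ≠ 1 →
      (∀ i ∈ I, 1 = ∑ j ∈ Jf i, z j → (a ∈ Jf i ↔ b ∈ Jf i)) → False := by
    intro a b hab a0 a1 b0 b1 h
    refine not_ext I J0 Jf z (Pi.single a 1 - Pi.single b 1) hz ?_ ?_ ?_ ?_ hext
    · intro h0
      have := congrFun h0 a
      simp [hab] at this
    · intro c hc
      have h1 : c ≠ a := by rintro rfl; tauto
      have h2 : c ≠ b := by rintro rfl; tauto
      simp [h1, h2]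
    · intro i hi ht
      have := h i hi ht
      simp [Finset.sum_sub_distrib, Finset.sum_pi_single', Finset.sum_pi_single, this]
    · intro _
      simp [Finset.sum_sub_distrib]
  by_cases hT : ∃ i ∈ I, 1 = ∑ j ∈ Jf i, z j ∧ ∃ a ∈ Jf i, z a ≠ 0 ∧ z a ≠ 1
  · obtain ⟨i, hi, ht, a, ha, a0, a1⟩ := hT
    obtain ⟨b, hb, hba, b0, b1⟩ := exists_other (Jf i) z z5 1 (by simp [← ht]) a ha a0 a1
    refine diff a b hba.symm a0 a1 b0 b1 fun i' hi' _ => ?_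
    by_cases hii : i = i'
    · subst hii; simp [ha, hb]
    · have hd := Finset.disjoint_left.mp (hdis i hi i' hi' hii)
      simp [hd ha, hd hb]
  · have hT' : ∀ i ∈ I, 1 = ∑ j ∈ Jf i, z j → ∀ a, z a ≠ 0 → z a ≠ 1 → a ∉ Jf i := by
      intro i hi ht a a0 a1 ha
      exact hT ⟨i, hi, ht, a, ha, a0, a1⟩
    by_cases hO : ∃ b, b ≠ j ∧ z b ≠ 0 ∧ z b ≠ 1
    · obtain ⟨b, hb, b0, b1⟩ := hO
      refine diff j b hb.symm hj.1 hj.2 b0 b1 fun i hi ht => ?_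
      simp [hT' i hi ht j hj.1 hj.2, hT' i hi ht b b0 b1]
    · refine not_ext I J0 Jf z (Pi.single j 1) hz (by simp) ?_ ?_ ?_ hext
      · intro c hc
        have h1 : c ≠ j := by rintro rfl; tauto
        simp [h1]
      · intro i hi ht
        simp [Finset.sum_pi_single', Finset.sum_pi_single, hT' i hi ht j hj.1 hj.2]
      · rintro ⟨k, hk⟩
        obtain ⟨b, -, hb⟩ := exists_other univ z z5 k hk j (by simp) hj.1 hj.2
        exact (hO ⟨b, hb⟩).elim

lemma PP_convex {n m l u : ℕ} (I : Finset (Fin m)) (J0 : Finset (Fin n))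
    (Jf : Fin m → Finset (Fin n)) : Convex ℝ (PP n l u I J0 Jf) := by
  rintro x ⟨x1, x2, ⟨x3, x4⟩, x5⟩ y ⟨y1, y2, ⟨y3, y4⟩, y5⟩ a b ha hb hab
  have hs : ∀ A : Finset (Fin n), ∑ j ∈ A, (a • x + b • y) j
      = a * ∑ j ∈ A, x j + b * ∑ j ∈ A, y j := by
    intro A; simp [Finset.sum_add_distrib, Finset.mul_sum]
  have hb' : b = 1 - a := by linarith
  refine ⟨fun j hj => ?_, fun i hi => ?_, ⟨?_, ?_⟩, fun j => ⟨?_, ?_⟩⟩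
  · simp [x1 j hj, y1 j hj]
  · rw [hs]
    have := mul_le_mul_of_nonneg_left (x2 i hi) ha
    have := mul_le_mul_of_nonneg_left (y2 i hi) hb
    linarith
  · rw [hs]
    have := mul_le_mul_of_nonneg_left x3 ha
    have := mul_le_mul_of_nonneg_left y3 hb
    have : (l : ℝ) = a * l + b * l := by rw [← add_mul, hab, one_mul]
    linarith
  · rw [hs]
    have := mul_le_mul_of_nonneg_left x4 ha
    have := mul_le_mul_of_nonneg_left y4 hb
    have : (u : ℝ) = a * u + b * u := by rw [← add_mul, hab, one_mul]
    linarith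
  · have := mul_nonneg ha (x5 j).1
    have := mul_nonneg hb (y5 j).1
    simp; linarith
  · have := mul_le_mul_of_nonneg_left (x5 j).2 ha
    have := mul_le_mul_of_nonneg_left (y5 j).2 hb
    simp; linarith

lemma PP_compact {n m l u : ℕ} (I : Finset (Fin m)) (J0 : Finset (Fin n))
    (Jf : Fin m → Finset (Fin n)) : IsCompact (PP n l u I J0 Jf) := by
  have hc : IsClosed (PP n l u I J0 Jf) := by
    have : PP n l u I J0 Jf = (⋂ j ∈ J0, {z : Fin n → ℝ | z j = 0}) ∩
        ((⋂ i ∈ I, {z : Fin n → ℝ | 1 ≤ ∑ j ∈ Jf i, z j}) ∩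
        (({z : Fin n → ℝ | (l : ℝ) ≤ ∑ j, z j} ∩ {z : Fin n → ℝ | ∑ j, z j ≤ (u : ℝ)}) ∩
        (⋂ j, {z : Fin n → ℝ | 0 ≤ z j} ∩ {z : Fin n → ℝ | z j ≤ 1}))) := by
      ext z; simp [PP]
    rw [this]
    refine IsClosed.inter ?_ (IsClosed.inter ?_ (IsClosed.inter (IsClosed.inter ?_ ?_) ?_))
    · exact isClosed_biInter fun j _ => isClosed_eq (by fun_prop) (by fun_prop)
    · exact isClosed_biInter fun j _ => isClosed_le (by fun_prop) (by fun_prop)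
    · exact isClosed_le (by fun_prop) (by fun_prop)
    · exact isClosed_le (by fun_prop) (by fun_prop)
    · exact isClosed_iInter fun j => (isClosed_le (by fun_prop) (by fun_prop)).inter
        (isClosed_le (by fun_prop) (by fun_prop))
  refine (isCompact_univ_pi (s := fun _ : Fin n => Set.Icc (0 : ℝ) 1)
    (fun _ => isCompact_Icc)).of_isClosed_subset hc ?_
  intro z hz j _
  exact hz.2.2.2 j

lemma PP_hull {n m l u : ℕ} (I : Finset (Fin m)) (J0 : Finset (Fin n))
    (Jf : Fin m → Finset (Fin n))
    (hdis : ∀ i ∈ I, ∀ i' ∈ I, i ≠ i' → Disjoint (Jf i) (Jf i')) :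
    convexHull ℝ {z | z ∈ PP n l u I J0 Jf ∧ ∀ j, z j = 0 ∨ z j = 1} = PP n l u I J0 Jf := by
  apply subset_antisymm
  · exact convexHull_min (fun z hz => hz.1) (PP_convex I J0 Jf)
  · have hfin : {z : Fin n → ℝ | z ∈ PP n l u I J0 Jf ∧ ∀ j, z j = 0 ∨ z j = 1}.Finite := by
      refine (Set.Finite.pi' (t := fun _ : Fin n => ({0, 1} : Set ℝ))
        (fun _ => by simp)).subset ?_
      intro z hz j
      exact hz.2 j
    have hKM := closure_convexHull_extremePoints
      (PP_compact (l := l) (u := u) I J0 Jf) (PP_convex I J0 Jf)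
    refine hKM.symm.subset.trans ?_
    exact closure_minimal (convexHull_mono fun z hz =>
      ⟨hz.1, fun j => ext_int I J0 Jf hdis z hz j⟩) (hfin.isCompact_convexHull ℝ).isClosed

theorem stmt0 (n m l u : ℕ) (S : Fin m → Finset (Fin n))
    (hn : 0 < n) (hm : 0 < m) (hlu : l ≤ u) (hu : 2 ≤ u)
    (hdist : Function.Injective S)
    (hcard : ∀ i, 1 ≤ (S i).card ∧ (S i).card ≤ n - l)
    (hinter : ClosedInter n m S)
    (δ : Fin m → ℝ) (hδ : δ ∈ Dset n m l u S) :
    ∃ (Istar : Finset (Fin m)) (J0 : Finset (Fin n)) (Jf : Fin m → Finset (Fin n)),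
      (∀ i ∈ Istar, Disjoint J0 (Jf i)) ∧
      (∀ i ∈ Istar, ∀ i' ∈ Istar, i ≠ i' → Disjoint (Jf i) (Jf i')) ∧
      convexHull ℝ (Xfiber n m l u S δ) =
        {z : Fin n → ℝ |
          (∀ j ∈ J0, z j = 0) ∧
          (∀ i ∈ Istar, 1 ≤ ∑ j ∈ Jf i, z j) ∧
          ((l : ℝ) ≤ ∑ j, z j ∧ ∑ j, z j ≤ (u : ℝ)) ∧
          (∀ j, 0 ≤ z j ∧ z j ≤ 1)} := by
  classical
  obtain ⟨⟨z0, δ'⟩, ⟨hz0, hδ01, hprod, -, -⟩, rfl⟩ := hδ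
  simp only at hz0 hδ01 hprod ⊢
  set J0 : Finset (Fin n) := univ.filter fun j => ∃ i, δ' i = 1 ∧ j ∈ S i with hJ0
  set Jf : Fin m → Finset (Fin n) := fun i => S i \ J0 with hJf
  set I : Finset (Fin m) := univ.filter fun i => δ' i = 0 ∧
    ∀ k, δ' k = 0 → Jf k ⊆ Jf i → Jf k = Jf i ∧ i ≤ k with hI
  have mI : ∀ i, i ∈ I ↔ δ' i = 0 ∧
    ∀ k, δ' k = 0 → Jf k ⊆ Jf i → Jf k = Jf i ∧ i ≤ k := by intro i; simp [hI]
  have mJ0 : ∀ j, j ∈ J0 ↔ ∃ i, δ' i = 1 ∧ j ∈ S i := by intro j; simp [hJ0]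
  have mJf : ∀ i j, j ∈ Jf i ↔ j ∈ S i ∧ j ∉ J0 := by intro i j; simp [hJf]
  have hdis : ∀ i ∈ I, ∀ i' ∈ I, i ≠ i' → Disjoint (Jf i) (Jf i') := by
    intro i hi i' hi' hne
    rw [Finset.disjoint_left]
    intro j hj hj'
    rw [mI] at hi hi'
    rw [mJf] at hj hj'
    obtain ⟨k, hk⟩ := hinter i i' ⟨j, by simp [hj.1, hj'.1]⟩
    have hjk : j ∈ S k := by rw [← hk]; simp [hj.1, hj'.1]
    have hk0 : δ' k = 0 := by
      rcases hδ01 k with h | h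
      · exact h
      · exact absurd ((mJ0 j).2 ⟨k, h, hjk⟩) hj.2
    have s1 : Jf k ⊆ Jf i := Finset.sdiff_subset_sdiff
      (by rw [← hk]; exact Finset.inter_subset_left) subset_rfl
    have s2 : Jf k ⊆ Jf i' := Finset.sdiff_subset_sdiff
      (by rw [← hk]; exact Finset.inter_subset_right) subset_rfl
    have e1 := (hi.2 k hk0 s1).1
    have e2 := (hi'.2 k hk0 s2).1
    have e : Jf i = Jf i' := e1.symm.trans e2
    exact hne (le_antisymm (hi.2 i' hi'.1 e.ge).2 (hi'.2 i hi.1 e.le).2)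
  have hmin : ∀ i, δ' i = 0 → ∃ k ∈ I, Jf k ⊆ Jf i := by
    intro i hi
    obtain ⟨k, hk, hkm⟩ := Finset.exists_min_image
      (univ.filter fun k => δ' k = 0 ∧ Jf k ⊆ Jf i) (fun k => (Jf k).card * m + k.val)
      ⟨i, by simp [hi]⟩
    simp only [Finset.mem_filter, Finset.mem_univ, true_and] at hk hkm
    refine ⟨k, (mI k).2 ⟨hk.1, fun k' hk' hs => ?_⟩, hk.2⟩
    have h1 := hkm k' ⟨hk', hs.trans hk.2⟩
    have h2 : (Jf k).card ≤ (Jf k').card := by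
      by_contra hlt
      push Not at hlt
      have h3 := Nat.mul_le_mul_right m (Nat.succ_le_of_lt hlt)
      rw [Nat.succ_mul] at h3
      have := k'.2
      omega
    have h3 : Jf k' = Jf k := Finset.eq_of_subset_of_card_le hs h2
    refine ⟨h3, ?_⟩
    rw [h3] at h1
    exact Fin.le_def.2 (by omega)
  refine ⟨I, J0, Jf, fun i _ => Finset.disjoint_sdiff, hdis, ?_⟩
  change _ = PP n l u I J0 Jf
  rw [← PP_hull I J0 Jf hdis]
  congr 1
  ext z
  constructor
  · rintro ⟨a1, -, a3, a4, a5⟩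
    simp only at a1 a3 a4 a5
    have hz01 : ∀ j, 0 ≤ z j ∧ z j ≤ 1 := by
      intro j; rcases a1 j with h | h <;> simp [h]
    have hJ : ∀ j ∈ J0, z j = 0 := by
      intro j hj
      obtain ⟨i, hi, hji⟩ := (mJ0 j).1 hj
      rcases a1 j with h | h
      · exact h
      · have := a3 i
        rw [hi, Finset.prod_eq_zero hji (by simp [h])] at this
        norm_num at this
    refine ⟨⟨hJ, ?_, ⟨a4, a5⟩, hz01⟩, a1⟩
    intro i hi
    have h0 := ((mI i).1 hi).1
    have h1 := a3 i
    rw [h0] at h1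
    obtain ⟨j, hj, hj1⟩ := Finset.prod_eq_zero_iff.1 h1.symm
    have hz1 : z j = 1 := by linarith
    have hjJ : j ∈ Jf i := (mJf i j).2 ⟨hj, fun h => by
      have := hJ j h; rw [hz1] at this; norm_num at this⟩
    rw [← hz1]
    exact Finset.single_le_sum (fun x _ => (hz01 x).1) hjJ
  · rintro ⟨⟨b1, b2, ⟨b3, b4⟩, b5⟩, a1⟩
    refine ⟨a1, hδ01, ?_, b3, b4⟩
    intro i
    simp only
    rcases hδ01 i with h | h
    · rw [h]
      obtain ⟨k, hk, hki⟩ := hmin i h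
      have h1 := b2 k hk
      have : ∃ j ∈ Jf k, z j ≠ 0 := by
        by_contra hcon
        push Not at hcon
        rw [Finset.sum_eq_zero hcon] at h1
        norm_num at h1
      obtain ⟨j, hj, hj0⟩ := this
      have hj1 := (a1 j).resolve_left hj0
      exact (Finset.prod_eq_zero ((mJf i j).1 (hki hj)).1 (by simp [hj1])).symm
    · rw [h]
      refine (Finset.prod_eq_one fun j hj => ?_).symm
      rw [b1 j ((mJ0 j).2 ⟨i, h, hj⟩)]; simp
end
end

section
/- Suppose every S_i is nonempty, the family S = {S_i}_{i∈I} is closed under union (for all i, j ∈ I there exists k ∈ I with S_i ∪ S_j = S_k) and closed under nonempty intersection, and Δ^{l,u} = Δ^{0,n}. Then S is a proper family; in particular, Δ^{0,n} consists of exactly m+1 affinely independent vectors of R^m. -/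
open Finset

noncomputable section

def pvec (n m : ℕ) (S : Fin m → Finset (Fin n)) : Option (Fin m) → (Fin m → ℝ)
  | none => 0
  | some k => fun i => if S i ⊆ S k then 1 else 0

lemma pvec_aff (n m : ℕ) (S : Fin m → Finset (Fin n)) (hdist : Function.Injective S) :
    AffineIndependent ℝ (pvec n m S) := by
  rw [affineIndependent_iff]
  intro s w hs hw
  have key : ∀ d : ℕ, ∀ k, n - (S k).card = d → some k ∈ s → w (some k) = 0 := by
    intro d
    induction d using Nat.strong_induction_on with
    | _ d ih =>
      intro k hk hks
      have h := congrFun hw k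
      rw [Finset.sum_apply, Finset.sum_eq_single (some k)] at h
      · simpa [pvec] using h
      · intro e he hne
        cases e with
        | none => simp [pvec]
        | some k' =>
          by_cases hsub : S k ⊆ S k'
          · have hss : S k ⊂ S k' := by
              refine Finset.ssubset_iff_subset_ne.mpr ⟨hsub, fun h => hne ?_⟩
              rw [hdist h]
            have h1 := Finset.card_lt_card hss
            have h2 : (S k').card ≤ n := by simpa using Finset.card_le_univ (S k')
            rw [Pi.smul_apply, ih (n - (S k').card) (by omega) k' rfl he, zero_smul]
          · simp [pvec, hsub]
      · intro h'; exact absurd hks h'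
  have hsome : ∀ k, some k ∈ s → w (some k) = 0 := fun k => key _ k rfl
  intro e he
  cases e with
  | some k => exact hsome k he
  | none =>
    rw [Finset.sum_eq_single none] at hs
    · exact hs
    · intro e he hne
      cases e with
      | none => exact absurd rfl hne
      | some k => exact hsome k he
    · intro h'; exact absurd he h'

lemma ind_mem (n m : ℕ) (S : Fin m → Finset (Fin n)) (Z : Finset (Fin n)) :
    (fun i => if S i ⊆ Z then (1 : ℝ) else 0) ∈ Dset n m 0 n S := by
  refine ⟨(fun j => if j ∈ Z then 0 else 1, fun i => if S i ⊆ Z then (1 : ℝ) else 0),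
    ⟨?_, ?_, ?_, ?_, ?_⟩, rfl⟩
  · intro j; dsimp only; split_ifs <;> simp
  · intro j; dsimp only; split_ifs <;> simp
  · intro i
    dsimp only
    split_ifs with h
    · symm; apply Finset.prod_eq_one
      intro j hj; simp [h hj]
    · obtain ⟨j, hj, hjZ⟩ := Finset.not_subset.mp h
      symm; apply Finset.prod_eq_zero hj; simp [hjZ]
  · simp only [Nat.cast_zero]
    apply Finset.sum_nonneg
    intro j _; split_ifs <;> simp
  · calc _ ≤ ∑ j : Fin n, (1 : ℝ) := by
          apply Finset.sum_le_sum
          intro j _; dsimp only; split_ifs <;> simp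
      _ = n := by simp

lemma exists_max (n m : ℕ) (S : Fin m → Finset (Fin n))
    (hunion : ∀ i j : Fin m, ∃ k, S i ∪ S j = S k) (Z : Finset (Fin n))
    (h : ∃ i, S i ⊆ Z) : ∃ k, ∀ i, S i ⊆ Z ↔ S i ⊆ S k := by
  classical
  obtain ⟨i0, hi0⟩ := h
  obtain ⟨k, hk, hmax⟩ := Finset.exists_max_image (Finset.univ.filter fun i => S i ⊆ Z)
    (fun i => (S i).card) ⟨i0, by simpa using hi0⟩
  simp only [Finset.mem_filter, Finset.mem_univ, true_and] at hk hmax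
  refine ⟨k, fun i => ⟨fun hi => ?_, fun hi => hi.trans hk⟩⟩
  obtain ⟨q, hq⟩ := hunion i k
  have h1 := hmax q (hq ▸ Finset.union_subset hi hk)
  have h2 : S k = S q := Finset.eq_of_subset_of_card_le (hq ▸ Finset.subset_union_right) h1
  rw [h2, ← hq]
  exact Finset.subset_union_left

lemma Dset_eq (n m : ℕ) (S : Fin m → Finset (Fin n))
    (hne : ∀ i, (S i).Nonempty)
    (hunion : ∀ i j : Fin m, ∃ k, S i ∪ S j = S k) :
    Dset n m 0 n S = Set.range (pvec n m S) := by
  classical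
  apply Set.Subset.antisymm
  · rintro δ ⟨⟨z, δ'⟩, ⟨hz, -, hp, -, -⟩, rfl⟩
    dsimp only at hz hp ⊢
    have hδ : ∀ i, δ' i = if S i ⊆ Finset.univ.filter (fun j => z j = 0) then 1 else 0 := by
      intro i
      rw [hp i]
      split_ifs with h
      · apply Finset.prod_eq_one
        intro j hj
        have := h hj
        simp only [Finset.mem_filter, Finset.mem_univ, true_and] at this
        simp [this]
      · obtain ⟨j, hj, hjZ⟩ := Finset.not_subset.mp h
        simp only [Finset.mem_filter, Finset.mem_univ, true_and] at hjZ
        apply Finset.prod_eq_zero hj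
        rw [(hz j).resolve_left hjZ, sub_self]
    by_cases hex : ∃ i, S i ⊆ Finset.univ.filter (fun j => z j = 0)
    · obtain ⟨k, hk⟩ := exists_max n m S hunion _ hex
      refine ⟨some k, ?_⟩
      funext i
      rw [hδ i]
      simp only [pvec, hk i]
    · refine ⟨none, ?_⟩
      funext i
      rw [hδ i, if_neg (fun h => hex ⟨i, h⟩)]
      rfl
  · rintro _ ⟨e, rfl⟩
    cases e with
    | some k => exact ind_mem n m S (S k)
    | none =>
      convert ind_mem n m S ∅ using 1
      funext i
      simp [pvec, (hne i).ne_empty]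

theorem stmt1 (n m l u : ℕ) (S : Fin m → Finset (Fin n))
    (hn : 0 < n) (hm : 0 < m) (hlu : l ≤ u) (hu : 2 ≤ u)
    (hdist : Function.Injective S)
    (hcard : ∀ i, 1 ≤ (S i).card ∧ (S i).card ≤ n - l)
    (hne : ∀ i, (S i).Nonempty)
    (hunion : ∀ i j : Fin m, ∃ k, S i ∪ S j = S k)
    (hinter : ClosedInter n m S)
    (hD : Dset n m l u S = Dset n m 0 n S) :
    ProperFam n m l u S ∧
    ∃ D : Finset (Fin m → ℝ), (D : Set (Fin m → ℝ)) = Dset n m 0 n S ∧ D.card = m + 1 ∧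
      AffineIndependent ℝ (Subtype.val : {x : Fin m → ℝ // x ∈ D} → (Fin m → ℝ)) := by
  classical
  have main : ∃ D : Finset (Fin m → ℝ), (D : Set (Fin m → ℝ)) = Dset n m 0 n S ∧
      D.card = m + 1 ∧
      AffineIndependent ℝ (Subtype.val : {x : Fin m → ℝ // x ∈ D} → (Fin m → ℝ)) := by
    have ha := pvec_aff n m S hdist
    have hc : ((Finset.univ.image (pvec n m S) : Finset (Fin m → ℝ)) : Set (Fin m → ℝ))
        = Set.range (pvec n m S) := by simp
    refine ⟨Finset.univ.image (pvec n m S), ?_, ?_, ?_⟩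
    · rw [hc, Dset_eq n m S hne hunion]
    · rw [Finset.card_image_of_injective _ ha.injective]; simp
    · have hr := ha.range
      rw [← hc] at hr
      exact hr
  refine ⟨⟨hinter, ?_⟩, main⟩
  rw [hD]
  exact main
end
end

section
/- Assume S is a proper family. Let α ∈ R^n, β ∈ R^m, γ ∈ R be such that α·z + β·δ ≤ γ is valid for X^{l,u} and defines a facet F of conv(X^{l,u}). Then either (a) there exist β' ∈ R^m and γ' ∈ R such that β'·δ ≤ γ' is valid for Δ^{l,u}, defines a facet of conv(Δ^{l,u}), and F = {(z,δ) ∈ conv(X^{l,u}) : β'·δ = γ'}; or (b) for every δ̄ ∈ Δ^{l,u}, γ − β·δ̄ = max{α·z : z ∈ X^{l,u}(δ̄)}. -/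
open Finset

noncomputable section

section helpers
variable {E : Type*} [AddCommGroup E] [Module ℝ E]

theorem aux_span (A : Set E) (h : E →ᵃ[ℝ] ℝ) (c : ℝ) (hA : ∀ x ∈ A, h x = c) :
    ∀ x ∈ affineSpan ℝ A, h x = c := by
  have hle : affineSpan ℝ A ≤ (AffineSubspace.mk' c (⊥ : Submodule ℝ ℝ)).comap h := by
    apply affineSpan_le.2
    intro x hx
    simp [AffineSubspace.mem_mk', hA x hx]
  intro x hx
  have := hle hx
  simpa [AffineSubspace.mem_mk', sub_eq_zero] using this

theorem aux_lt [FiniteDimensional ℝ E] (A B : Set E) (hAB : A ⊆ (affineSpan ℝ B : Set E))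
    (hne : A.Nonempty) (h : E →ᵃ[ℝ] ℝ) (c : ℝ) (hA : ∀ x ∈ A, h x = c)
    (hB : ∃ p ∈ B, h p ≠ c) :
    Module.finrank ℝ (affineSpan ℝ A).direction < Module.finrank ℝ (affineSpan ℝ B).direction := by
  have hle : affineSpan ℝ A ≤ affineSpan ℝ B := affineSpan_le.2 hAB
  have hd := AffineSubspace.direction_le hle
  apply Submodule.finrank_lt_finrank_of_lt
  refine lt_of_le_of_ne hd fun heq => ?_
  obtain ⟨a, ha⟩ := hne
  have h2 : affineSpan ℝ A = affineSpan ℝ B :=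
    AffineSubspace.ext_of_direction_eq heq ⟨a, subset_affineSpan ℝ A ha, hAB ha⟩
  obtain ⟨p, hp, hpc⟩ := hB
  exact hpc (aux_span A h c hA p (h2 ▸ subset_affineSpan ℝ B hp))

theorem aux_face [FiniteDimensional ℝ E] (P : Set E) (f h : E →ᵃ[ℝ] ℝ) (c d : ℝ)
    (hne : {x ∈ convexHull ℝ P | f x = c}.Nonempty)
    (hfr : Module.finrank ℝ (affineSpan ℝ {x ∈ convexHull ℝ P | f x = c}).direction + 1 =
      Module.finrank ℝ (affineSpan ℝ P).direction)
    (hFG : {x ∈ convexHull ℝ P | f x = c} ⊆ {x ∈ convexHull ℝ P | h x = d})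
    (hp : ∃ p ∈ P, h p ≠ d) :
    {x ∈ convexHull ℝ P | f x = c} = {x ∈ convexHull ℝ P | h x = d} := by
  refine Set.Subset.antisymm hFG fun x hx => ⟨hx.1, ?_⟩
  have hlt := aux_lt {x ∈ convexHull ℝ P | h x = d} P
    (fun y hy => convexHull_subset_affineSpan P hy.1) (hne.mono hFG) h d (fun y hy => hy.2) hp
  by_contra hxc
  have := aux_lt {x ∈ convexHull ℝ P | f x = c} {x ∈ convexHull ℝ P | h x = d}
    (hFG.trans (subset_affineSpan ℝ _)) hne f c (fun y hy => hy.2) ⟨x, hx, hxc⟩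
  omega

theorem aux_sub (P : Set E) (f g : E →ᵃ[ℝ] ℝ) (c : ℝ)
    (hP : ∀ x ∈ P, f x ≤ c ∧ 0 ≤ g x ∧ (f x = c → g x = 0)) :
    ∀ x ∈ convexHull ℝ P, f x ≤ c ∧ 0 ≤ g x ∧ (f x = c → g x = 0) := by
  have hc : Convex ℝ {x : E | f x ≤ c ∧ 0 ≤ g x ∧ (f x = c → g x = 0)} := by
    rw [convex_iff_forall_pos]
    rintro x ⟨hx1, hx2, hx3⟩ y ⟨hy1, hy2, hy3⟩ a b ha hb hab
    have hf : f (a • x + b • y) = a * f x + b * f y := by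
      simpa using Convex.combo_affine_apply (f := f) (x := x) (y := y) hab
    have hg : g (a • x + b • y) = a * g x + b * g y := by
      simpa using Convex.combo_affine_apply (f := g) (x := x) (y := y) hab
    have hac : a * c + b * c = c := by rw [← add_mul, hab, one_mul]
    have hax : a * f x ≤ a * c := mul_le_mul_of_nonneg_left hx1 ha.le
    have hby : b * f y ≤ b * c := mul_le_mul_of_nonneg_left hy1 hb.le
    refine ⟨?_, ?_, ?_⟩
    · rw [hf]; linarith
    · rw [hg]; positivity
    · rw [hf, hg]
      intro h
      have h1 : f x = c := by
        by_contra hne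
        have := mul_lt_mul_of_pos_left (lt_of_le_of_ne hx1 hne) ha
        linarith
      have h2 : f y = c := by
        by_contra hne
        have := mul_lt_mul_of_pos_left (lt_of_le_of_ne hy1 hne) hb
        linarith
      rw [hx3 h1, hy3 h2]; simp
  exact fun x hx => convexHull_min (fun y hy => hP y hy) hc hx

end helpers

theorem aux_form (m : ℕ) (L : (Fin m → ℝ) →ₗ[ℝ] ℝ) (x : Fin m → ℝ) :
    ∑ i, L (Pi.single i 1) * x i = L x := by
  rw [LinearMap.pi_apply_eq_sum_univ L x]
  refine Finset.sum_congr rfl fun i _ => ?_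
  rw [smul_eq_mul, mul_comm]
  congr 2
  ext j
  simp [Pi.single_apply, eq_comm]

theorem aux_coord (m : ℕ) (D : Finset (Fin m → ℝ)) (hcard : D.card = m + 1)
    (hD : AffineIndependent ℝ (Subtype.val : {x : Fin m → ℝ // x ∈ D} → (Fin m → ℝ)))
    (d : Fin m → ℝ) (hd : d ∈ D) :
    ∃ h : (Fin m → ℝ) →ᵃ[ℝ] ℝ, h d = 1 ∧ ∀ e ∈ D, e ≠ d → h e = 0 := by
  have htop : affineSpan ℝ (Set.range (Subtype.val : {x : Fin m → ℝ // x ∈ D} → (Fin m → ℝ))) = ⊤ := by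
    rw [hD.affineSpan_eq_top_iff_card_eq_finrank_add_one]
    simp [hcard]
  let b : AffineBasis {x : Fin m → ℝ // x ∈ D} ℝ (Fin m → ℝ) := ⟨Subtype.val, hD, htop⟩
  refine ⟨b.coord ⟨d, hd⟩, b.coord_apply_eq ⟨d, hd⟩, fun e he hne => ?_⟩
  exact b.coord_apply_ne (i := ⟨d, hd⟩) (j := ⟨e, he⟩) (fun h => hne (by simpa using h.symm))

theorem stmt2 (n m l u : ℕ) (S : Fin m → Finset (Fin n))
    (hn : 0 < n) (hm : 0 < m) (hlu : l ≤ u) (hu : 2 ≤ u)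
    (hdist : Function.Injective S)
    (hcard : ∀ i, 1 ≤ (S i).card ∧ (S i).card ≤ n - l)
    (hproper : ProperFam n m l u S)
    (α : Fin n → ℝ) (β : Fin m → ℝ) (γ : ℝ)
    (hfacet : IsFacet (Xset n m l u S)
      (fun zd => ∑ j, α j * zd.1 j + ∑ i, β i * zd.2 i) γ) :
    (∃ (β' : Fin m → ℝ) (γ' : ℝ),
        IsFacet (Dset n m l u S) (fun d => ∑ i, β' i * d i) γ' ∧
        {x ∈ convexHull ℝ (Xset n m l u S) |
            ∑ j, α j * x.1 j + ∑ i, β i * x.2 i = γ} =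
          {x ∈ convexHull ℝ (Xset n m l u S) | ∑ i, β' i * x.2 i = γ'}) ∨
    (∀ δ ∈ Dset n m l u S,
        IsGreatest ((fun z => ∑ j, α j * z j) '' Xfiber n m l u S δ)
          (γ - ∑ i, β i * δ i)) := by
  obtain ⟨_, D, hDset, hDcard, hDind⟩ := hproper
  obtain ⟨hvalid, hfr⟩ := hfacet
  by_cases hb : ∀ δ ∈ Dset n m l u S,
        IsGreatest ((fun z => ∑ j, α j * z j) '' Xfiber n m l u S δ)
          (γ - ∑ i, β i * δ i)
  · exact Or.inr hb
  left
  push Not at hb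
  obtain ⟨d, hdD, hng⟩ := hb
  have hstrict : ∀ z, (z, d) ∈ Xset n m l u S → ∑ j, α j * z j + ∑ i, β i * d i ≠ γ := by
    intro z hz heq
    apply hng
    refine ⟨⟨z, hz, ?_⟩, ?_⟩
    · simp only; linarith
    · rintro _ ⟨w, hw, rfl⟩
      have := hvalid _ hw
      simp only at this ⊢
      linarith
  -- finrank of the affine span of the projection
  have hDspan : Module.finrank ℝ (affineSpan ℝ (Dset n m l u S)).direction = m := by
    have htop : affineSpan ℝ (Set.range (Subtype.val : {x : Fin m → ℝ // x ∈ D} → (Fin m → ℝ))) = ⊤ := by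
      rw [hDind.affineSpan_eq_top_iff_card_eq_finrank_add_one]
      simp [hDcard]
    have : Set.range (Subtype.val : {x : Fin m → ℝ // x ∈ D} → (Fin m → ℝ)) = Dset n m l u S := by
      rw [← hDset]; ext x; simp
    rw [← this, htop]
    rw [AffineSubspace.direction_top, finrank_top]; simp
  obtain ⟨f, hf⟩ : ∃ f : ((Fin n → ℝ) × (Fin m → ℝ)) →ᵃ[ℝ] ℝ,
      ∀ x, f x = ∑ j, α j * x.1 j + ∑ i, β i * x.2 i := by
    refine ⟨(((∑ j, α j • (LinearMap.proj j : (Fin n → ℝ) →ₗ[ℝ] ℝ)) ∘ₗ LinearMap.fst ℝ _ _) +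
      ((∑ i, β i • (LinearMap.proj i : (Fin m → ℝ) →ₗ[ℝ] ℝ)) ∘ₗ LinearMap.snd ℝ _ _)).toAffineMap, ?_⟩
    intro x
    simp
  have hfun : (fun zd : (Fin n → ℝ) × (Fin m → ℝ) => ∑ j, α j * zd.1 j + ∑ i, β i * zd.2 i) = f :=
    funext fun x => (hf x).symm
  rw [hfun] at hfr
  simp only [← hf] at hvalid ⊢
  rcases Set.eq_empty_or_nonempty {x ∈ convexHull ℝ (Xset n m l u S) | f x = γ} with hemp | hne
  · -- degenerate case
    rw [hemp] at hfr ⊢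
    have h1 : Module.finrank ℝ (affineSpan ℝ (Dset n m l u S)).direction ≤
        Module.finrank ℝ (affineSpan ℝ (Xset n m l u S)).direction := by
      have : affineSpan ℝ (Dset n m l u S) = (affineSpan ℝ (Xset n m l u S)).map
          (LinearMap.snd ℝ (Fin n → ℝ) (Fin m → ℝ)).toAffineMap := by
        rw [AffineSubspace.map_span]; rfl
      rw [this, AffineSubspace.map_direction]
      exact Submodule.finrank_map_le _ _
    have h0 : Module.finrank ℝ (affineSpan ℝ (∅ : Set ((Fin n → ℝ) × (Fin m → ℝ)))).direction = 0 := by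
      rw [AffineSubspace.span_empty, AffineSubspace.direction_bot, finrank_bot]
    rw [h0] at hfr
    have hm1 : m = 1 := by omega
    refine ⟨0, 1, ⟨by simp, ?_⟩, by simp⟩
    rw [hDspan]
    have : {x ∈ convexHull ℝ (Dset n m l u S) | ∑ i, (0 : Fin m → ℝ) i * x i = 1} = ∅ := by
      simp
    rw [this, AffineSubspace.span_empty, AffineSubspace.direction_bot, finrank_bot]
    omega
  · have hmem : ∀ e, e ∈ D ↔ e ∈ Dset n m l u S := fun e => by rw [← hDset]; simp
    obtain ⟨h, hd1, hd0⟩ := aux_coord m D hDcard hDind d ((hmem d).2 hdD)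
    have hform : ∀ x : Fin m → ℝ, ∑ i, (- h.linear (Pi.single i 1)) * x i = h 0 - h x := by
      intro x
      have := aux_form m h.linear x
      have h2 : h x = h.linear x + h 0 := by
        have := congrFun h.decomp x
        simpa using this
      simp only [neg_mul, Finset.sum_neg_distrib]
      rw [this, h2]; ring
    have hform' : ∀ x : Fin m → ℝ, ∑ i, (- h.linear (Pi.single i 1)) * x i = h 0 ↔ h x = 0 := by
      intro x
      rw [hform]; constructor <;> intro hh <;> linarith
    have hval : ∀ e ∈ Dset n m l u S, e = d ∨ h e = 0 := fun e he => by
      by_cases hed : e = d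
      · exact Or.inl hed
      · exact Or.inr (hd0 e ((hmem e).2 he) hed)
    refine ⟨fun i => - h.linear (Pi.single i 1), h 0, ⟨?_, ?_⟩, ?_⟩
    · intro e he
      simp only [hform]
      rcases hval e he with rfl | h0
      · rw [hd1]; linarith
      · rw [h0]; linarith
    · have hset : {x ∈ convexHull ℝ (Dset n m l u S) |
          (fun d : Fin m → ℝ => ∑ i, (- h.linear (Pi.single i 1)) * d i) x = h 0} =
          {x ∈ convexHull ℝ (Dset n m l u S) | h x = 0} := by
        ext x; simp only [Set.mem_setOf_eq, hform']
      rw [hset, hDspan]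
      have hcardE : (D.erase d).card = m := by
        rw [Finset.card_erase_of_mem ((hmem d).2 hdD), hDcard]; simp
      have hsub : ((D.erase d : Finset (Fin m → ℝ)) : Set (Fin m → ℝ)) ⊆
          {x ∈ convexHull ℝ (Dset n m l u S) | h x = 0} := by
        intro e he
        simp only [Finset.coe_erase, Set.mem_sdiff, Finset.mem_coe, Set.mem_singleton_iff] at he
        exact ⟨subset_convexHull ℝ _ ((hmem e).1 he.1), hd0 e he.1 he.2⟩
      have hneE : (D.erase d).Nonempty := by
        rw [← Finset.card_pos]; omega
      have hlt := aux_lt {x ∈ convexHull ℝ (Dset n m l u S) | h x = 0} (Dset n m l u S)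
        (fun y hy => convexHull_subset_affineSpan _ hy.1)
        (Set.Nonempty.mono hsub hneE) h 0 (fun y hy => hy.2) ⟨d, hdD, by rw [hd1]; norm_num⟩
      rw [hDspan] at hlt
      have hindE : AffineIndependent ℝ (Subtype.val : {x // x ∈ D.erase d} → (Fin m → ℝ)) :=
        hDind.mono (s := {x | x ∈ D.erase d}) (t := {x | x ∈ D}) (fun x hx => Finset.mem_of_mem_erase hx)
      have hfrE := hindE.finrank_vectorSpan (n := m - 1) (by simp only [Fintype.card_coe, hcardE]; omega)
      have hle : vectorSpan ℝ (Set.range (Subtype.val : {x // x ∈ D.erase d} → (Fin m → ℝ))) ≤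
          (affineSpan ℝ {x ∈ convexHull ℝ (Dset n m l u S) | h x = 0}).direction := by
        rw [direction_affineSpan]
        apply vectorSpan_mono
        rintro _ ⟨x, rfl⟩
        exact hsub x.2
      have := Submodule.finrank_mono hle
      omega
    · simp only [hform']
      obtain ⟨⟨z, d'⟩, hzd, hzd'⟩ := hdD
      simp only at hzd'
      subst hzd'
      refine aux_face (Xset n m l u S) f
        (h.comp (LinearMap.snd ℝ (Fin n → ℝ) (Fin m → ℝ)).toAffineMap) γ 0 hne hfr ?_
        ⟨_, hzd, by simp [hd1]⟩
      rintro x ⟨hx, hxf⟩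
      refine ⟨hx, (aux_sub (Xset n m l u S) f
        (h.comp (LinearMap.snd ℝ (Fin n → ℝ) (Fin m → ℝ)).toAffineMap) γ ?_ x hx).2.2 hxf⟩
      rintro ⟨w, e⟩ hy
      refine ⟨hvalid _ hy, ?_⟩
      simp only [AffineMap.coe_comp, LinearMap.coe_toAffineMap, Function.comp_apply, LinearMap.snd_apply]
      rcases hval e ⟨_, hy, rfl⟩ with rfl | h0
      · refine ⟨by rw [hd1]; norm_num, fun hh => absurd ?_ (hstrict w hy)⟩
        rw [hf] at hh; exact hh
      · exact ⟨h0.ge, fun _ => h0⟩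
end
end

section
/- Assume S is a proper family and fix an enumeration Δ^{l,u} = {δ^1,…,δ^{m+1}}. Suppose (α, β, γ) ∈ R^n × R^m × R satisfies γ − β·δ̄ = max{α·z : z ∈ X^{l,u}(δ̄)} for every δ̄ ∈ Δ^{l,u}. If α⁺, α⁻ ∈ R^n both follow the pattern of α and α = λα⁺ + μα⁻ for some λ ≥ 0 and μ ≥ 0, then ν_α = λ·ν_{α⁺} + μ·ν_{α⁻}. -/
open Finset

noncomputable section

def FF {n m : ℕ} (l u : ℕ) (S : Fin m → Finset (Fin n)) (P : Fin m → Prop)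
    (T : Finset (Fin n)) : Prop :=
  (∀ i, P i → ∀ j ∈ S i, j ∉ T) ∧ (∀ i, ¬ P i → ∃ j ∈ S i, j ∈ T) ∧ l ≤ T.card ∧ T.card ≤ u

lemma card_swap {n : ℕ} (T : Finset (Fin n)) (x y : Fin n) (hx : x ∈ T) (hy : y ∉ T) :
    (insert y (T.erase x)).card = T.card := by
  rw [Finset.card_insert_of_notMem (by simp [hy]), Finset.card_erase_of_mem hx]
  have : 0 < T.card := Finset.card_pos.mpr ⟨x, hx⟩
  omega

lemma crit {n m l u : ℕ} {S : Fin m → Finset (Fin n)} (hS : ClosedInter n m S)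
    {P : Fin m → Prop} {T T' : Finset (Fin n)} (hT : FF l u S P T) (hT' : FF l u S P T')
    {x : Fin n} (hx : x ∈ T) (hx' : x ∉ T')
    (hc : ∃ i, ¬ P i ∧ ∀ j ∈ S i, j ∈ T → j = x) :
    ∃ y, y ∈ T' ∧ y ∉ T ∧ FF l u S P (insert y (T.erase x)) ∧
      FF l u S P (insert x (T'.erase y)) := by
  classical
  obtain ⟨i, hi, hmin⟩ := Finset.exists_min_image
    (Finset.univ.filter fun i => ¬ P i ∧ ∀ j ∈ S i, j ∈ T → j = x) (fun i => (S i).card)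
    (by obtain ⟨i, hi⟩ := hc; exact ⟨i, by simpa using hi⟩)
  simp only [Finset.mem_filter, Finset.mem_univ, true_and] at hi hmin
  obtain ⟨hiP, hix⟩ := hi
  obtain ⟨y, hyS, hyT'⟩ := hT'.2.1 i hiP
  have hyT : y ∉ T := fun h => hx' ((hix y hyS h) ▸ hyT')
  have hxS : x ∈ S i := by
    obtain ⟨j, hj, hjT⟩ := hT.2.1 i hiP
    exact (hix j hj hjT) ▸ hj
  refine ⟨y, hyT', hyT, ⟨?_, ?_, ?_⟩, ⟨?_, ?_, ?_⟩⟩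
  · intro k hk j hj hjT
    have h1 := hT.1 k hk j hj
    have h2 := hT'.1 k hk j hj
    grind
  · intro k hk
    by_cases h : ∀ j ∈ S k, j ∈ T → j = x
    · have hxk : x ∈ S k := by
        obtain ⟨j, hj, hjT⟩ := hT.2.1 k hk
        exact (h j hj hjT) ▸ hj
      obtain ⟨p, hp⟩ := hS i k ⟨x, by simp [hxS, hxk]⟩
      have hxp : x ∈ S p := by rw [← hp]; simp [hxS, hxk]
      have hpP : ¬ P p := fun h => hT.1 p h x hxp hx
      have hle := hmin p ⟨hpP, fun j hj hjT => hix j (by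
        rw [← hp] at hj; exact (Finset.mem_inter.mp hj).1) hjT⟩
      rw [← hp] at hle
      have := Finset.eq_of_subset_of_card_le Finset.inter_subset_left hle
      rw [← this] at hyS
      exact ⟨y, (Finset.mem_inter.mp hyS).2, by simp⟩
    · push Not at h
      obtain ⟨j, hj, hjT, hjx⟩ := h
      exact ⟨j, hj, by simp [hjT, hjx]⟩
  · rw [card_swap _ _ _ hx hyT]; exact hT.2.2
  · intro k hk j hj hjT
    have h1 := hT.1 k hk j hj
    have h2 := hT'.1 k hk j hj
    grind
  · intro k hk
    obtain ⟨j, hj, hjT'⟩ := hT'.2.1 k hk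
    by_cases hjy : j = y
    · subst hjy
      obtain ⟨p, hp⟩ := hS i k ⟨j, by simp [hyS, hj]⟩
      have hjp : j ∈ S p := by rw [← hp]; simp [hyS, hj]
      have hpP : ¬ P p := fun h => hT'.1 p h j hjp hjT'
      obtain ⟨q, hq, hqT⟩ := hT.2.1 p hpP
      rw [← hp, Finset.mem_inter] at hq
      have := hix q hq.1 hqT
      subst this
      exact ⟨q, hq.2, by simp⟩
    · exact ⟨j, hj, by simp [hjT', hjy]⟩
  · rw [card_swap _ _ _ hyT' hx']; exact hT'.2.2

lemma noncrit {n m l u : ℕ} {S : Fin m → Finset (Fin n)} 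
    {P : Fin m → Prop} {T : Finset (Fin n)} (hT : FF l u S P T) {x : Fin n}
    (hc : ¬ ∃ i, ¬ P i ∧ ∀ j ∈ S i, j ∈ T → j = x) :
    ∀ i, ¬ P i → ∃ j ∈ S i, j ∈ T.erase x := by
  intro i hi
  push Not at hc
  obtain ⟨j, h1, h2, h3⟩ := hc i hi
  exact ⟨j, h1, by simp [h2, h3]⟩

lemma exch_sub {n m l u : ℕ} {S : Fin m → Finset (Fin n)} 
    {P : Fin m → Prop} {T T' : Finset (Fin n)} (hT : FF l u S P T) (hT' : FF l u S P T')
    {x : Fin n} (hx : x ∈ T) (hx' : x ∉ T') (hsub : T' ⊆ T) :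
    FF l u S P (T.erase x) ∧ FF l u S P (insert x T') := by
  have h1 : T' ⊆ T.erase x := fun j hj => by
    rw [Finset.mem_erase]; exact ⟨fun h => hx' (h ▸ hj), hsub hj⟩
  have h2 : insert x T' ⊆ T := Finset.insert_subset hx hsub
  refine ⟨⟨?_, ?_, ?_, ?_⟩, ⟨?_, ?_, ?_, ?_⟩⟩
  · exact fun k hk j hj h => hT.1 k hk j hj (Finset.mem_of_mem_erase h)
  · intro k hk
    obtain ⟨j, hj, h⟩ := hT'.2.1 k hk
    exact ⟨j, hj, h1 h⟩
  · exact hT'.2.2.1.trans (Finset.card_le_card h1)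
  · exact (Finset.card_le_card (Finset.erase_subset _ _)).trans hT.2.2.2
  · exact fun k hk j hj h => hT.1 k hk j hj (h2 h)
  · intro k hk
    obtain ⟨j, hj, h⟩ := hT'.2.1 k hk
    exact ⟨j, hj, by simp [h]⟩
  · exact hT'.2.2.1.trans (Finset.card_le_card (Finset.subset_insert _ _))
  · exact (Finset.card_le_card h2).trans hT.2.2.2

lemma exch {n m l u : ℕ} {S : Fin m → Finset (Fin n)} (hS : ClosedInter n m S)
    {P : Fin m → Prop} {T T' : Finset (Fin n)} (hT : FF l u S P T) (hT' : FF l u S P T')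
    (hne : T ≠ T') :
    (∃ x y, x ∈ T ∧ x ∉ T' ∧ y ∈ T' ∧ y ∉ T ∧ FF l u S P (insert y (T.erase x)) ∧
      FF l u S P (insert x (T'.erase y))) ∨
    (∃ x, x ∈ T ∧ x ∉ T' ∧ FF l u S P (T.erase x) ∧ FF l u S P (insert x T')) ∨
    (∃ y, y ∈ T' ∧ y ∉ T ∧ FF l u S P (insert y T) ∧ FF l u S P (T'.erase y)) := by
  by_cases h1 : T' ⊆ T
  · have h2 : ¬ T ⊆ T' := fun h => hne (h.antisymm h1)
    obtain ⟨x, hx, hx'⟩ := Finset.not_subset.mp h2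
    exact Or.inr (Or.inl ⟨x, hx, hx', exch_sub hT hT' hx hx' h1⟩)
  obtain ⟨y, hy, hy'⟩ := Finset.not_subset.mp h1
  by_cases h2 : T ⊆ T'
  · exact Or.inr (Or.inr ⟨y, hy, hy', (exch_sub hT' hT hy hy' h2).symm⟩)
  obtain ⟨x, hx, hx'⟩ := Finset.not_subset.mp h2
  left
  by_cases c1 : ∃ i, ¬ P i ∧ ∀ j ∈ S i, j ∈ T → j = x
  · obtain ⟨y, a, b, c, d⟩ := crit hS hT hT' hx hx' c1
    exact ⟨x, y, hx, hx', a, b, c, d⟩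
  by_cases c2 : ∃ i, ¬ P i ∧ ∀ j ∈ S i, j ∈ T' → j = y
  · obtain ⟨x, a, b, c, d⟩ := crit hS hT' hT hy hy' c2
    exact ⟨x, y, a, b, hy, hy', d, c⟩
  have k1 := noncrit hT c1
  have k2 := noncrit hT' c2
  refine ⟨x, y, hx, hx', hy, hy', ⟨?_, ?_, ?_⟩, ⟨?_, ?_, ?_⟩⟩
  · intro k hk j hj hjT
    have h1 := hT.1 k hk j hj
    have h2 := hT'.1 k hk j hj
    grind
  · intro k hk
    obtain ⟨j, hj, h⟩ := k1 k hk
    exact ⟨j, hj, Finset.mem_insert_of_mem h⟩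
  · rw [card_swap _ _ _ hx hy']; exact hT.2.2
  · intro k hk j hj hjT
    have h1 := hT.1 k hk j hj
    have h2 := hT'.1 k hk j hj
    grind
  · intro k hk
    obtain ⟨j, hj, h⟩ := k2 k hk
    exact ⟨j, hj, Finset.mem_insert_of_mem h⟩
  · rw [card_swap _ _ _ hy hx']; exact hT'.2.2

lemma sum_swap {n : ℕ} (a : Fin n → ℝ) (T : Finset (Fin n)) (x y : Fin n) (hx : x ∈ T)
    (hy : y ∉ T) : ∑ j ∈ insert y (T.erase x), a j = ∑ j ∈ T, a j - a x + a y := by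
  rw [Finset.sum_insert (by simp [hy]), Finset.sum_erase_eq_sub hx]; ring

lemma opt {n m l u : ℕ} {S : Fin m → Finset (Fin n)} (hS : ClosedInter n m S)
    {P : Fin m → Prop} {T : Finset (Fin n)} (hT : FF l u S P T) (a b : Fin n → ℝ)
    (hab : FollowsPattern n a b)
    (hopt : ∀ T', FF l u S P T' → ∑ j ∈ T', a j ≤ ∑ j ∈ T, a j) :
    ∀ k : ℕ, ∀ T', FF l u S P T' → (T \ T').card + (T' \ T).card = k →
      ∑ j ∈ T', b j ≤ ∑ j ∈ T, b j := by
  intro k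
  induction k using Nat.strong_induction_on with
  | _ k ih =>
  intro T' hT' hk
  by_cases hne : T = T'
  · rw [hne]
  rcases exch hS hT hT' hne with ⟨x, y, hx, hx', hy, hy', h1, h2⟩ | ⟨x, hx, hx', h1, h2⟩ |
    ⟨y, hy, hy', h1, h2⟩
  · have e1 := hopt _ h1
    rw [sum_swap _ _ _ _ hx hy'] at e1
    have e2 := hab.2 x y (by linarith)
    have c1 : (T \ insert x (T'.erase y)).card < (T \ T').card :=
      Finset.card_lt_card (by
        rw [Finset.ssubset_iff_of_subset (by grind)]; exact ⟨x, by grind⟩)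
    have c2 : (insert x (T'.erase y) \ T).card ≤ (T' \ T).card :=
      Finset.card_le_card (by grind)
    have e3 := ih _ (by omega) _ h2 rfl
    rw [sum_swap _ _ _ _ hy hx'] at e3
    linarith
  · have e1 := hopt _ h1
    rw [Finset.sum_erase_eq_sub hx] at e1
    have e2 := (hab.1 x).1 (by linarith)
    have c1 : (T \ insert x T').card < (T \ T').card :=
      Finset.card_lt_card (by
        rw [Finset.ssubset_iff_of_subset (by grind)]; exact ⟨x, by grind⟩)
    have c2 : (insert x T' \ T).card ≤ (T' \ T).card :=
      Finset.card_le_card (by grind)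
    have e3 := ih _ (by omega) _ h2 rfl
    rw [Finset.sum_insert hx'] at e3
    linarith
  · have e1 := hopt _ h1
    rw [Finset.sum_insert hy'] at e1
    have e2 := (hab.1 y).2 (by linarith)
    have c1 : (T'.erase y \ T).card < (T' \ T).card :=
      Finset.card_lt_card (by
        rw [Finset.ssubset_iff_of_subset (by grind)]; exact ⟨y, by grind⟩)
    have c2 : (T \ T'.erase y).card ≤ (T \ T').card :=
      Finset.card_le_card (by grind)
    have e3 := ih _ (by omega) _ h2 rfl
    rw [Finset.sum_erase_eq_sub hy] at e3
    linarith

lemma prod_ind {n : ℕ} (A T : Finset (Fin n)) :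
    ∏ j ∈ A, (1 - (if j ∈ T then (1:ℝ) else 0)) = if ∃ j ∈ A, j ∈ T then 0 else 1 := by
  split_ifs with h
  · obtain ⟨j, hj, hjT⟩ := h
    exact Finset.prod_eq_zero hj (by simp [hjT])
  · push Not at h
    exact Finset.prod_eq_one fun j hj => by simp [h j hj]

lemma fiber_iff {n m l u : ℕ} {S : Fin m → Finset (Fin n)} {δ : Fin m → ℝ}
    (hδ : ∀ i, δ i = 0 ∨ δ i = 1) (T : Finset (Fin n)) :
    (fun j => if j ∈ T then (1:ℝ) else 0) ∈ Xfiber n m l u S δ ↔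
      FF l u S (fun i => δ i = 1) T := by
  have hs : ∑ j, (if j ∈ T then (1:ℝ) else 0) = T.card := by simp
  simp only [Xfiber, Xset, Set.mem_setOf_eq, FF, prod_ind, hs, Nat.cast_le]
  constructor
  · rintro ⟨-, -, h, h1, h2⟩
    refine ⟨?_, ?_, h1, h2⟩
    · intro i hi j hj hjT
      have := h i
      rw [if_pos ⟨j, hj, hjT⟩, hi] at this
      norm_num at this
    · intro i hi
      by_contra hh
      exact hi (by rw [h i, if_neg hh])
  · rintro ⟨h1, h2, h3, h4⟩
    refine ⟨fun j => by split_ifs <;> simp, hδ, fun i => ?_, h3, h4⟩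
    split_ifs with h
    · obtain ⟨j, hj, hjT⟩ := h
      exact (hδ i).resolve_right fun hi => h1 i hi j hj hjT
    · by_contra hi
      exact h (h2 i hi)

lemma fiber_exists {n m l u : ℕ} {S : Fin m → Finset (Fin n)} {δ : Fin m → ℝ}
    {z : Fin n → ℝ} (hz : z ∈ Xfiber n m l u S δ) :
    ∃ T : Finset (Fin n), z = fun j => if j ∈ T then (1:ℝ) else 0 := by
  classical
  refine ⟨Finset.univ.filter fun j => z j = 1, ?_⟩
  funext j
  rcases hz.1 j with h | h <;> simp at h <;> simp [h]

lemma val_eq {n : ℕ} (a : Fin n → ℝ) (T : Finset (Fin n)) :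
    ∑ j, a j * (if j ∈ T then (1:ℝ) else 0) = ∑ j ∈ T, a j := by
  simp

lemma pattern_opt {n m l u : ℕ} {S : Fin m → Finset (Fin n)} (hS : ClosedInter n m S)
    {δ : Fin m → ℝ} {z : Fin n → ℝ} (hz : z ∈ Xfiber n m l u S δ) (a b : Fin n → ℝ)
    (hab : FollowsPattern n a b)
    (hopt : ∀ z' ∈ Xfiber n m l u S δ, ∑ j, a j * z' j ≤ ∑ j, a j * z j) :
    ∀ z' ∈ Xfiber n m l u S δ, ∑ j, b j * z' j ≤ ∑ j, b j * z j := by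
  intro z' hz'
  have hδ : ∀ i, δ i = 0 ∨ δ i = 1 := hz.2.1
  obtain ⟨T, rfl⟩ := fiber_exists hz
  obtain ⟨T', rfl⟩ := fiber_exists hz'
  simp only [val_eq] at hopt ⊢
  refine opt hS ((fiber_iff hδ T).mp hz) a b hab ?_ _ T' ((fiber_iff hδ T').mp hz') rfl
  intro T'' hT''
  have := hopt _ ((fiber_iff hδ T'').mpr hT'')
  rwa [val_eq] at this

theorem stmt3 (n m l u : ℕ) (S : Fin m → Finset (Fin n))
    (hn : 0 < n) (hm : 0 < m) (hlu : l ≤ u) (hu : 2 ≤ u)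
    (hdist : Function.Injective S)
    (hcard : ∀ i, 1 ≤ (S i).card ∧ (S i).card ≤ n - l)
    (hproper : ProperFam n m l u S)
    (D : Fin (m + 1) → (Fin m → ℝ)) (hDinj : Function.Injective D)
    (hDrange : Set.range D = Dset n m l u S)
    (α αp αm : Fin n → ℝ) (β : Fin m → ℝ) (γ : ℝ)
    (heq : ∀ i : Fin (m + 1),
      IsGreatest ((fun z => ∑ j, α j * z j) '' Xfiber n m l u S (D i))
        (γ - ∑ k, β k * D i k))
    (hpat1 : FollowsPattern n α αp) (hpat2 : FollowsPattern n α αm)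
    (lam mu : ℝ) (hlam : 0 ≤ lam) (hmu : 0 ≤ mu)
    (hcomb : α = lam • αp + mu • αm)
    (να νp νm : Fin (m + 1) → ℝ)
    (hνα : ∀ i, IsGreatest ((fun z => ∑ j, α j * z j) '' Xfiber n m l u S (D i)) (να i))
    (hνp : ∀ i, IsGreatest ((fun z => ∑ j, αp j * z j) '' Xfiber n m l u S (D i)) (νp i))
    (hνm : ∀ i, IsGreatest ((fun z => ∑ j, αm j * z j) '' Xfiber n m l u S (D i)) (νm i)) :
    να = lam • νp + mu • νm := by
  have hS := hproper.1
  funext i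
  obtain ⟨⟨z, hz, hzv⟩, hmax⟩ := hνα i
  have hopt : ∀ z' ∈ Xfiber n m l u S (D i), ∑ j, α j * z' j ≤ ∑ j, α j * z j := by
    intro z' hz'
    have := hmax ⟨z', hz', rfl⟩
    rw [← hzv] at this
    exact this
  have key : ∀ (b : Fin n → ℝ) (v : ℝ), FollowsPattern n α b →
      IsGreatest ((fun z => ∑ j, b j * z j) '' Xfiber n m l u S (D i)) v →
      v = ∑ j, b j * z j := by
    intro b v hb hv
    refine hv.unique ⟨⟨z, hz, rfl⟩, ?_⟩
    rintro _ ⟨z', hz', rfl⟩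
    exact pattern_opt hS hz α b hb hopt z' hz'
  have e1 := key αp _ hpat1 (hνp i)
  have e2 := key αm _ hpat2 (hνm i)
  simp only [Pi.add_apply, Pi.smul_apply, smul_eq_mul]
  rw [← hzv, e1, e2, hcomb, Finset.mul_sum, Finset.mul_sum, ← Finset.sum_add_distrib]
  refine Finset.sum_congr rfl fun j _ => ?_
  simp only [Pi.add_apply, Pi.smul_apply, smul_eq_mul]
  ring
end
end

section
/- Assume S is a proper family. Then every facet F of conv(X^{l,u}) is defined by some inequality ᾱ·z + β̄·δ ≤ γ̄, i.e., the inequality is valid for X^{l,u} and F = {(z,δ) ∈ conv(X^{l,u}) : ᾱ·z + β̄·δ = γ̄}, in which there exists κ ∈ R with ᾱ_j ∈ {0, κ} for every j ∈ J. -/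
open Finset

noncomputable section

def Fib {n m : ℕ} (l u : ℕ) (S : Fin m → Finset (Fin n)) (A : Fin m → Prop)
    (Z : Finset (Fin n)) : Prop :=
  (∀ i, Disjoint (S i) Z ↔ A i) ∧ l ≤ Z.card ∧ Z.card ≤ u

def Move {n : ℕ} (Z W Z' W' : Finset (Fin n)) : Prop :=
  (∃ j, j ∈ W ∧ j ∉ Z ∧ Z' = insert j Z ∧ W' = W.erase j) ∨
  (∃ i, i ∈ Z ∧ i ∉ W ∧ Z' = Z.erase i ∧ W' = insert i W) ∨
  (∃ i j, i ∈ Z ∧ i ∉ W ∧ j ∈ W ∧ j ∉ Z ∧ Z' = insert j (Z.erase i) ∧ W' = insert i (W.erase j))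

theorem fib_iff {n m l u : ℕ} {S : Fin m → Finset (Fin n)} {A : Fin m → Prop}
    {Z : Finset (Fin n)} : Fib l u S A Z ↔
      (∀ i, A i → ∀ x ∈ S i, x ∉ Z) ∧ (∀ i, ¬ A i → ∃ x ∈ S i, x ∈ Z) ∧ l ≤ Z.card ∧ Z.card ≤ u := by
  unfold Fib
  constructor
  · rintro ⟨h, h1⟩
    refine ⟨fun i hi x hx hz => Finset.disjoint_left.1 ((h i).2 hi) hx hz, fun i hi => ?_, h1⟩
    rw [← h i, Finset.not_disjoint_iff] at hi
    exact hi
  · rintro ⟨h, h2, h1⟩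
    refine ⟨fun i => ⟨fun hd => ?_, fun hi => Finset.disjoint_left.2 (h i hi)⟩, h1⟩
    by_contra hi
    obtain ⟨x, hx, hz⟩ := h2 i hi
    exact Finset.disjoint_left.1 hd hx hz

theorem swap_fib {n m l u : ℕ} {S : Fin m → Finset (Fin n)} {A : Fin m → Prop}
    {Z W : Finset (Fin n)} (hZ : Fib l u S A Z) (hW : Fib l u S A W) {i j : Fin n}
    (hi : i ∈ Z) (hj : j ∈ W) (hj' : j ∉ Z)
    (h : ∀ k, ¬ A k → (∀ x ∈ S k, x ∈ Z → x = i) → j ∈ S k) :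
    Fib l u S A (insert j (Z.erase i)) := by
  rw [fib_iff] at *
  obtain ⟨z1, z2, z3, z4⟩ := hZ
  obtain ⟨w1, w2, w3, w4⟩ := hW
  have hc : (insert j (Z.erase i)).card = Z.card := by
    rw [Finset.card_insert_of_notMem (by simp [hj']), Finset.card_erase_add_one hi]
  rw [hc]
  refine ⟨fun k hk x hx hxz => ?_, fun k hk => ?_, z3, z4⟩
  · rw [Finset.mem_insert, Finset.mem_erase] at hxz
    rcases hxz with rfl | hxz
    · exact w1 k hk _ hx hj
    · exact z1 k hk _ hx hxz.2
  · by_cases hh : ∀ x ∈ S k, x ∈ Z → x = i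
    · exact ⟨j, h k hk hh, by simp⟩
    · push Not at hh
      obtain ⟨x, hx, hxz, hxi⟩ := hh
      exact ⟨x, hx, by simp [hxz, hxi]⟩

/-- exchange when i is critical in Z -/
theorem exch_crit {n m l u : ℕ} {S : Fin m → Finset (Fin n)} {A : Fin m → Prop}
    (hS : ClosedInter n m S)
    {Z W : Finset (Fin n)} (hZ : Fib l u S A Z) (hW : Fib l u S A W) {i : Fin n}
    (hi : i ∈ Z) (hiW : i ∉ W) (hc : ∃ k, ¬ A k ∧ ∀ x ∈ S k, x ∈ Z → x = i) :
    ∃ j, j ∈ W ∧ j ∉ Z ∧ Fib l u S A (insert j (Z.erase i)) ∧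
      Fib l u S A (insert i (W.erase j)) := by
  classical
  obtain ⟨k, hk, hmin⟩ := Finset.exists_min_image
    (Finset.univ.filter fun k => ¬ A k ∧ ∀ x ∈ S k, x ∈ Z → x = i) (fun k => (S k).card)
    (by obtain ⟨k, hk⟩ := hc; exact ⟨k, by simpa using hk⟩)
  simp only [Finset.mem_filter, Finset.mem_univ, true_and] at hk hmin
  obtain ⟨hkA, hkc⟩ := hk
  have Z0 := fib_iff.1 hZ
  have W0 := fib_iff.1 hW
  have ik : ∀ k, ¬ A k → (∀ x ∈ S k, x ∈ Z → x = i) → i ∈ S k := by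
    intro k hk hh
    obtain ⟨x, hx, hxz⟩ := Z0.2.1 k hk
    exact hh x hx hxz ▸ hx
  obtain ⟨j, hjk, hjW⟩ := W0.2.1 k hkA
  have hjZ : j ∉ Z := fun h => hiW (hkc j hjk h ▸ hjW)
  refine ⟨j, hjW, hjZ, swap_fib hZ hW hi hjW hjZ ?_, swap_fib hW hZ hjW hi hiW ?_⟩
  · intro p hpA hp
    obtain ⟨r, hr⟩ := hS k p ⟨i, Finset.mem_inter.2 ⟨ik k hkA hkc, ik p hpA hp⟩⟩
    have hir : i ∈ S r := hr ▸ Finset.mem_inter.2 ⟨ik k hkA hkc, ik p hpA hp⟩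
    have hrA : ¬ A r := fun h => Z0.1 r h i hir hi
    have hle := hmin r ⟨hrA, fun x hx hz => hkc x (by rw [← hr] at hx; exact (Finset.mem_inter.1 hx).1) hz⟩
    have hsub : S r ⊆ S k := hr ▸ Finset.inter_subset_left
    have heq := Finset.eq_of_subset_of_card_le hsub hle
    rw [← heq, ← hr] at hjk
    exact (Finset.mem_inter.1 hjk).2
  · intro p hpA hp
    have hjp : j ∈ S p := by
      obtain ⟨x, hx, hxw⟩ := W0.2.1 p hpA
      exact hp x hx hxw ▸ hx
    obtain ⟨r, hr⟩ := hS k p ⟨j, Finset.mem_inter.2 ⟨hjk, hjp⟩⟩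
    have hjr : j ∈ S r := hr ▸ Finset.mem_inter.2 ⟨hjk, hjp⟩
    have hrA : ¬ A r := fun h => W0.1 r h j hjr hjW
    obtain ⟨x, hx, hxz⟩ := Z0.2.1 r hrA
    rw [← hr, Finset.mem_inter] at hx
    exact hkc x hx.1 hxz ▸ hx.2

theorem sub_fib {n m l u : ℕ} {S : Fin m → Finset (Fin n)} {A : Fin m → Prop}
    {Z W V : Finset (Fin n)} (hZ : Fib l u S A Z) (hW : Fib l u S A W) (h1 : Z ⊆ V) (h2 : V ⊆ W) :
    Fib l u S A V := by
  rw [fib_iff] at *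
  exact ⟨fun i hi x hx hv => hW.1 i hi x hx (h2 hv),
    fun i hi => let ⟨x, hx, hz⟩ := hZ.2.1 i hi; ⟨x, hx, h1 hz⟩,
    hZ.2.2.1.trans (Finset.card_le_card h1), (Finset.card_le_card h2).trans hW.2.2.2⟩

theorem exch_s4 {n m l u : ℕ} {S : Fin m → Finset (Fin n)} {A : Fin m → Prop}
    (hS : ClosedInter n m S)
    {Z W : Finset (Fin n)} (hZ : Fib l u S A Z) (hW : Fib l u S A W) (hne : Z ≠ W) :
    ∃ Z' W', Move Z W Z' W' ∧ Fib l u S A Z' ∧ Fib l u S A W' := by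
  by_cases h1 : Z ⊆ W
  · obtain ⟨j, hj, hj'⟩ := Finset.exists_of_ssubset (lt_of_le_of_ne h1 hne)
    refine ⟨_, _, Or.inl ⟨j, hj, hj', rfl, rfl⟩, sub_fib hZ hW (Finset.subset_insert _ _) ?_,
      sub_fib hZ hW ?_ (Finset.erase_subset _ _)⟩
    · exact Finset.insert_subset hj h1
    · intro x hx
      exact Finset.mem_erase.2 ⟨fun h => hj' (h ▸ hx), h1 hx⟩
  by_cases h2 : W ⊆ Z
  · obtain ⟨j, hj, hj'⟩ := Finset.exists_of_ssubset (lt_of_le_of_ne h2 hne.symm)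
    refine ⟨_, _, Or.inr (Or.inl ⟨j, hj, hj', rfl, rfl⟩), sub_fib hW hZ ?_ (Finset.erase_subset _ _),
      sub_fib hW hZ (Finset.subset_insert _ _) ?_⟩
    · intro x hx
      exact Finset.mem_erase.2 ⟨fun h => hj' (h ▸ hx), h2 hx⟩
    · exact Finset.insert_subset hj h2
  obtain ⟨i, hi, hi'⟩ := Finset.not_subset.1 h1
  obtain ⟨j, hj, hj'⟩ := Finset.not_subset.1 h2
  by_cases c1 : ∃ k, ¬ A k ∧ ∀ x ∈ S k, x ∈ Z → x = i
  · obtain ⟨j, a, b, c, d⟩ := exch_crit hS hZ hW hi hi' c1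
    exact ⟨_, _, Or.inr (Or.inr ⟨i, j, hi, hi', a, b, rfl, rfl⟩), c, d⟩
  by_cases c2 : ∃ k, ¬ A k ∧ ∀ x ∈ S k, x ∈ W → x = j
  · obtain ⟨i, a, b, c, d⟩ := exch_crit hS hW hZ hj hj' c2
    exact ⟨_, _, Or.inr (Or.inr ⟨i, j, a, b, hj, hj', rfl, rfl⟩), d, c⟩
  exact ⟨_, _, Or.inr (Or.inr ⟨i, j, hi, hi', hj, hj', rfl, rfl⟩),
    swap_fib hZ hW hi hj hj' (fun k hk hh => absurd ⟨k, hk, hh⟩ c1),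
    swap_fib hW hZ hj hi hi' (fun k hk hh => absurd ⟨k, hk, hh⟩ c2)⟩

theorem opt_pattern {n m l u : ℕ} {S : Fin m → Finset (Fin n)} {A : Fin m → Prop}
    (hS : ClosedInter n m S) {α α' : Fin n → ℝ} (hp : FollowsPattern n α α')
    {Z : Finset (Fin n)} (hZ : Fib l u S A Z)
    (hopt : ∀ W, Fib l u S A W → ∑ j ∈ W, α j ≤ ∑ j ∈ Z, α j) :
    ∀ (N : ℕ) (W), Fib l u S A W → (symmDiff Z W).card ≤ N → ∑ j ∈ W, α' j ≤ ∑ j ∈ Z, α' j := by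
  intro N
  induction N with
  | zero =>
    intro W hW h
    have : symmDiff Z W = ⊥ := Finset.card_eq_zero.1 (Nat.le_zero.1 h)
    rw [symmDiff_eq_bot] at this
    rw [this]
  | succ N ih =>
    intro W hW h
    by_cases hne : Z = W
    · rw [hne]
    obtain ⟨Z', W', hm, hZ', hW'⟩ := exch_s4 hS hZ hW hne
    have ho := hopt Z' hZ'
    have hlt : symmDiff Z W' ⊂ symmDiff Z W → (symmDiff Z W').card ≤ N := fun hs => by
      have := Finset.card_lt_card hs
      omega
    rcases hm with ⟨j, a, b, rfl, rfl⟩ | ⟨i, a, b, rfl, rfl⟩ | ⟨i, j, a, b, c, d, rfl, rfl⟩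
    · have := ih _ hW' (hlt (by
        rw [Finset.ssubset_iff]
        refine ⟨j, by simp [Finset.mem_symmDiff, a, b], ?_⟩
        intro x; simp only [Finset.mem_insert, Finset.mem_symmDiff, Finset.mem_erase]; grind))
      rw [Finset.sum_insert b] at ho
      have h3 := (hp.1 j).2 (by linarith)
      have := Finset.sum_erase_add W α' a
      linarith
    · have := ih _ hW' (hlt (by
        rw [Finset.ssubset_iff]
        refine ⟨i, by simp [Finset.mem_symmDiff, a, b], ?_⟩
        intro x; simp only [Finset.mem_insert, Finset.mem_symmDiff]; grind))
      rw [Finset.sum_insert b] at this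
      have h4 := Finset.sum_erase_add Z α a
      have h3 := (hp.1 i).1 (by linarith)
      linarith
    · have := ih _ hW' (hlt (by
        rw [Finset.ssubset_iff]
        refine ⟨i, by simp [Finset.mem_symmDiff, a, b], ?_⟩
        intro x; simp only [Finset.mem_insert, Finset.mem_symmDiff, Finset.mem_erase]; grind))
      rw [Finset.sum_insert (by simp [b])] at this
      rw [Finset.sum_insert (by simp [d])] at ho
      have h4 := Finset.sum_erase_add Z α a
      have h5 := Finset.sum_erase_add W α' c
      have h3 := hp.2 i j (by linarith)
      linarith

def lev {n : ℕ} (α : Fin n → ℝ) : Finset ℝ := insert 0 (Finset.univ.image α)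

theorem decomp_pos {n : ℕ} (α : Fin n → ℝ) (j0 : Fin n) (h0 : 0 < α j0) :
    ∃ α' α'' : Fin n → ℝ, ∃ κ, (∀ j, α j = α' j + α'' j) ∧ (∀ j, α' j = 0 ∨ α' j = κ) ∧
      FollowsPattern n α α' ∧ FollowsPattern n α α'' ∧ (lev α'').card < (lev α).card := by
  have hne : (lev α).Nonempty := ⟨0, by simp [lev]⟩
  set M := (lev α).max' hne with hM
  have hmem : ∀ j, α j ∈ lev α := fun j => by simp [lev]
  have hle : ∀ j, α j ≤ M := fun j => Finset.le_max' _ _ (hmem j)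
  have hM0 : 0 < M := h0.trans_le (hle j0)
  have hMm : M ∈ lev α := Finset.max'_mem _ _
  have hne2 : ((lev α).erase M).Nonempty := ⟨0, by simp [lev, hM0.ne]⟩
  set M' := ((lev α).erase M).max' hne2 with hM'
  have hM'0 : 0 ≤ M' := Finset.le_max' _ _ (by simp [lev, hM0.ne])
  have hM'm : M' ∈ (lev α).erase M := Finset.max'_mem _ _
  have hM'M : M' < M := lt_of_le_of_ne (Finset.le_max' _ _ (Finset.mem_of_mem_erase hM'm))
    (Finset.ne_of_mem_erase hM'm)
  have hdi : ∀ j, α j = M ∨ α j ≤ M' := fun j => by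
    by_cases h : α j = M
    · exact Or.inl h
    · exact Or.inr (Finset.le_max' _ _ (Finset.mem_erase.2 ⟨h, hmem j⟩))
  refine ⟨fun j => max (α j - M') 0, fun j => min (α j) M', M - M', ?_, ?_, ⟨?_, ?_⟩, ⟨?_, ?_⟩, ?_⟩
  · intro j
    dsimp only
    rcases le_total (α j) M' with h | h
    · rw [max_eq_right (by linarith), min_eq_left h]; ring
    · rw [max_eq_left (by linarith), min_eq_right h]; ring
  · intro j
    rcases hdi j with h | h
    · right; dsimp only; rw [h, max_eq_left (by linarith)]
    · left; exact max_eq_right (by linarith)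
  · intro j
    exact ⟨fun _ => le_max_right _ _, fun h => max_le (by linarith) le_rfl⟩
  · intro a b h
    exact max_le_max (by linarith) le_rfl
  · intro j
    exact ⟨fun h => le_min h hM'0, fun h => (min_le_left _ _).trans h⟩
  · intro a b h
    exact min_le_min h le_rfl
  · refine lt_of_le_of_lt (Finset.card_le_card (t := (lev α).erase M) ?_)
      (Finset.card_erase_lt_of_mem hMm)
    intro x hx
    simp only [lev, Finset.mem_insert, Finset.mem_image, Finset.mem_univ, true_and] at hx
    rcases hx with rfl | ⟨j, rfl⟩
    · simp [lev, hM0.ne]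
    · rcases le_total (α j) M' with h | h
      · rw [min_eq_left h]
        exact Finset.mem_erase.2 ⟨by linarith, hmem j⟩
      · rw [min_eq_right h]; exact hM'm

theorem lev_neg {n : ℕ} (α : Fin n → ℝ) : (lev (fun j => - α j)).card = (lev α).card := by
  have : lev (fun j => - α j) = (lev α).image (fun x => -x) := by
    ext x
    simp [lev, Finset.image_image, Finset.image_insert, Function.comp_def]
  rw [this, Finset.card_image_of_injective _ neg_injective]

theorem pat_neg {n : ℕ} {α α' : Fin n → ℝ} (h : FollowsPattern n (fun j => - α j) α') :
    FollowsPattern n α (fun j => - α' j) := by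
  refine ⟨fun j => ⟨fun h1 => ?_, fun h1 => ?_⟩, fun a b hab => ?_⟩
  · have := (h.1 j).2 (by simpa using h1); simpa using this
  · have := (h.1 j).1 (by simpa using h1); simpa using this
  · have := h.2 b a (by simpa using hab); simpa using this

theorem decomp {n : ℕ} (α : Fin n → ℝ) (j0 : Fin n) (h0 : α j0 ≠ 0) :
    ∃ α' α'' : Fin n → ℝ, ∃ κ, (∀ j, α j = α' j + α'' j) ∧ (∀ j, α' j = 0 ∨ α' j = κ) ∧
      FollowsPattern n α α' ∧ FollowsPattern n α α'' ∧ (lev α'').card < (lev α).card := by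
  rcases lt_or_gt_of_ne h0 with h | h
  · obtain ⟨a, b, κ, h1, h2, h3, h4, h5⟩ := decomp_pos (fun j => - α j) j0 (by simpa using h)
    refine ⟨fun j => - a j, fun j => - b j, -κ, fun j => by have := h1 j; linarith, fun j => ?_,
      pat_neg h3, pat_neg h4, ?_⟩
    · rcases h2 j with h | h <;> simp [h]
    · rw [lev_neg]; rw [lev_neg] at h5; exact h5
  · exact decomp_pos α j0 h

theorem fun_affine {m : ℕ} (D : Finset (Fin m → ℝ)) (hc : D.card = m + 1)
    (hD : AffineIndependent ℝ (Subtype.val : {x : Fin m → ℝ // x ∈ D} → (Fin m → ℝ)))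
    (h : (Fin m → ℝ) → ℝ) :
    ∃ (β : Fin m → ℝ) (γ : ℝ), ∀ δ ∈ D, h δ = γ - ∑ i, β i * δ i := by
  classical
  have htop : affineSpan ℝ (Set.range (Subtype.val : {x : Fin m → ℝ // x ∈ D} → (Fin m → ℝ))) = ⊤ := by
    rw [hD.affineSpan_eq_top_iff_card_eq_finrank_add_one]
    simp [hc]
  let b : AffineBasis {x : Fin m → ℝ // x ∈ D} ℝ (Fin m → ℝ) := ⟨_, hD, htop⟩
  let g : (Fin m → ℝ) →ᵃ[ℝ] ℝ := ∑ i : {x : Fin m → ℝ // x ∈ D}, h i.1 • b.coord i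
  have hg : ∀ δ ∈ D, g δ = h δ := by
    intro δ hδ
    have hev : ∀ (s : Finset {x : Fin m → ℝ // x ∈ D}),
        (∑ i ∈ s, h i.1 • b.coord i : (Fin m → ℝ) →ᵃ[ℝ] ℝ) δ = ∑ i ∈ s, h i.1 * b.coord i δ := by
      intro s
      induction s using Finset.induction_on with
      | empty => simp
      | insert a s ha ih => rw [Finset.sum_insert ha, Finset.sum_insert ha, ← ih]; simp
    have hb : ∀ i, b.coord i δ = if i = ⟨δ, hδ⟩ then 1 else 0 := by
      intro i
      exact b.coord_apply i ⟨δ, hδ⟩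
    change (∑ i, h i.1 • b.coord i : (Fin m → ℝ) →ᵃ[ℝ] ℝ) δ = _
    rw [hev]
    simp [hb]
  refine ⟨fun i => - g.linear (Pi.single i 1), g 0, fun δ hδ => ?_⟩
  rw [← hg δ hδ]
  have h1 : g δ = g.linear δ + g 0 := by
    have := congrFun (AffineMap.decomp g) δ
    simpa using this
  have h2 : g.linear δ = ∑ i, g.linear (Pi.single i 1) * δ i := by
    conv_lhs => rw [LinearMap.pi_apply_eq_sum_univ g.linear δ]
    refine Finset.sum_congr rfl fun i _ => ?_
    rw [smul_eq_mul, mul_comm]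
    congr 2
    ext k; simp [Pi.single_apply, eq_comm]
  rw [h1, h2]
  simp [Finset.sum_neg_distrib]
  ring

theorem hull_le {E : Type*} [AddCommGroup E] [Module ℝ E] {P : Set E} {f : E →ₗ[ℝ] ℝ} {c : ℝ}
    (h : ∀ x ∈ P, f x ≤ c) : ∀ x ∈ convexHull ℝ P, f x ≤ c := by
  intro x hx
  exact convexHull_min (t := {x | f x ≤ c}) h (convex_halfSpace_le f.isLinear c) hx

theorem span_eq {E : Type*} [AddCommGroup E] [Module ℝ E] {P : Set E} {f : E →ₗ[ℝ] ℝ} {c : ℝ}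
    (h : ∀ x ∈ P, f x = c) : ∀ x ∈ affineSpan ℝ P, f x = c := by
  intro x hx
  refine affineSpan_induction (p := fun x => f x = c) hx h ?_
  intro r u v w hu hv hw
  simp [hu, hv, hw]

theorem face_lemma {E : Type*} [AddCommGroup E] [Module ℝ E] [FiniteDimensional ℝ E]
    {P F : Set E} {f f1 f2 : E →ₗ[ℝ] ℝ} {c c1 c2 : ℝ} (hf : f = f1 + f2) (hc : c = c1 + c2)
    (h1 : ∀ x ∈ P, f1 x ≤ c1) (h2 : ∀ x ∈ P, f2 x ≤ c2)
    (hF : F = {x ∈ convexHull ℝ P | f x = c}) (hne : F.Nonempty)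
    (hdim : Module.finrank ℝ (affineSpan ℝ F).direction + 1 =
      Module.finrank ℝ (affineSpan ℝ P).direction) :
    F = {x ∈ convexHull ℝ P | f1 x = c1} ∨ ∀ x ∈ P, f1 x = c1 := by
  by_cases hall : ∀ x ∈ P, f1 x = c1
  · exact Or.inr hall
  left
  push Not at hall
  obtain ⟨x0, hx0, hx0c⟩ := hall
  set F1 := {x ∈ convexHull ℝ P | f1 x = c1} with hF1
  have hsub : F ⊆ F1 := by
    intro x hx
    rw [hF] at hx
    obtain ⟨hx, hxc⟩ := hx
    have a := hull_le h1 x hx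
    have b := hull_le h2 x hx
    refine ⟨hx, ?_⟩
    rw [hf, hc, LinearMap.add_apply] at hxc
    linarith
  have l1 : affineSpan ℝ F ≤ affineSpan ℝ F1 := affineSpan_mono ℝ hsub
  have l2 : affineSpan ℝ F1 ≤ affineSpan ℝ P := by
    rw [← affineSpan_convexHull (𝕜 := ℝ) P]
    exact affineSpan_mono ℝ (fun x hx => hx.1)
  obtain ⟨y, hy⟩ := hne
  have hlt : affineSpan ℝ F1 < affineSpan ℝ P := by
    refine lt_of_le_of_ne l2 fun h => ?_
    have : x0 ∈ affineSpan ℝ F1 := h ▸ subset_affineSpan ℝ P hx0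
    exact hx0c (span_eq (fun x hx => hx.2) x0 this)
  have hdlt : (affineSpan ℝ F1).direction < (affineSpan ℝ P).direction :=
    AffineSubspace.direction_lt_of_nonempty hlt ⟨y, subset_affineSpan ℝ F1 (hsub hy)⟩
  have e1 := Submodule.finrank_lt_finrank_of_lt hdlt
  have e2 : (affineSpan ℝ F).direction = (affineSpan ℝ F1).direction :=
    Submodule.eq_of_le_of_finrank_le (AffineSubspace.direction_le l1) (by omega)
  have e3 : affineSpan ℝ F = affineSpan ℝ F1 :=
    AffineSubspace.eq_of_direction_eq_of_nonempty_of_le e2 ⟨y, subset_affineSpan ℝ F hy⟩ l1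
  refine Set.Subset.antisymm hsub fun x hx => ?_
  have hxs : x ∈ affineSpan ℝ F := e3 ▸ subset_affineSpan ℝ F1 hx
  have := span_eq (f := f) (c := c) (P := F) (fun x hx => by rw [hF] at hx; exact hx.2) x hxs
  rw [hF]
  exact ⟨hx.1, this⟩

def supp {n : ℕ} (z : Fin n → ℝ) : Finset (Fin n) := Finset.univ.filter fun j => z j = 1

theorem sum_supp {n : ℕ} {z : Fin n → ℝ} (hz : ∀ j, z j = 0 ∨ z j = 1) (α : Fin n → ℝ) :
    ∑ j, α j * z j = ∑ j ∈ supp z, α j := by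
  rw [supp, Finset.sum_filter]
  refine Finset.sum_congr rfl fun j _ => ?_
  rcases hz j with h | h <;> simp [h]

theorem prod_supp {n : ℕ} {z : Fin n → ℝ} (hz : ∀ j, z j = 0 ∨ z j = 1) (T : Finset (Fin n)) :
    ∏ j ∈ T, (1 - z j) = 1 ↔ Disjoint T (supp z) := by
  constructor
  · intro h
    rw [Finset.disjoint_left]
    intro j hj hjs
    rw [Finset.prod_eq_zero hj] at h
    · exact zero_ne_one h
    · simp only [supp, Finset.mem_filter] at hjs
      linarith [hjs.2]
  · intro h
    refine Finset.prod_eq_one fun j hj => ?_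
    have := Finset.disjoint_left.1 h hj
    simp only [supp, Finset.mem_filter, Finset.mem_univ, true_and] at this
    rcases hz j with h | h
    · simp [h]
    · exact absurd h this

theorem X_fib {n m l u : ℕ} {S : Fin m → Finset (Fin n)} {z : Fin n → ℝ} {δ : Fin m → ℝ}
    (h : (z, δ) ∈ Xset n m l u S) : Fib l u S (fun i => δ i = 1) (supp z) := by
  obtain ⟨h1, h2, h3, h4, h5⟩ := h
  dsimp only at h1 h2 h3 h4 h5
  have hs : ∑ j, z j = ((supp z).card : ℝ) := by
    have := sum_supp h1 (fun _ => 1)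
    simpa using this
  rw [hs] at h4 h5
  refine ⟨fun i => ?_, by exact_mod_cast h4, by exact_mod_cast h5⟩
  rw [← prod_supp h1, ← h3 i]

theorem fib_X {n m l u : ℕ} {S : Fin m → Finset (Fin n)} {δ : Fin m → ℝ}
    (hδ : ∀ i, δ i = 0 ∨ δ i = 1) {Z : Finset (Fin n)} (h : Fib l u S (fun i => δ i = 1) Z) :
    ∃ z, (z, δ) ∈ Xset n m l u S ∧ supp z = Z := by
  classical
  let z : Fin n → ℝ := fun j => if j ∈ Z then 1 else 0
  have hz : ∀ j, z j = 0 ∨ z j = 1 := fun j => by by_cases h : j ∈ Z <;> simp [z, h]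
  have hs : supp z = Z := by ext j; simp [supp, z]
  have hsum : ∑ j, z j = (Z.card : ℝ) := by
    have := sum_supp hz (fun _ => 1)
    simpa [hs] using this
  refine ⟨z, ⟨hz, hδ, fun i => ?_, ?_, ?_⟩, hs⟩
  · have h1 := (prod_supp hz (S i)).trans (hs ▸ h.1 i)
    dsimp only
    rcases hδ i with h0 | h0
    · rw [h0]
      have h2 : ¬ ∏ j ∈ S i, (1 - z j) = 1 := fun h => by
        have := h1.1 h; dsimp only at this; linarith
      by_contra h3
      apply h2
      refine Finset.prod_eq_one fun j hj => ?_
      rcases hz j with h | h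
      · simp [h]
      · exact absurd (Finset.prod_eq_zero hj (by simp [h])).symm h3
    · rw [h0, h1.2 h0]
  · dsimp only; rw [hsum]; exact_mod_cast h.2.1
  · dsimp only; rw [hsum]; exact_mod_cast h.2.2

theorem maximizer {n m l u : ℕ} {S : Fin m → Finset (Fin n)} (hS : ClosedInter n m S)
    (α : Fin n → ℝ) (δ : Fin m → ℝ) (hδ : δ ∈ Dset n m l u S) :
    ∃ z, (z, δ) ∈ Xset n m l u S ∧ ∀ α', FollowsPattern n α α' → ∀ w, (w, δ) ∈ Xset n m l u S →
      ∑ j, α' j * w j ≤ ∑ j, α' j * z j := by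
  classical
  obtain ⟨⟨z0, δ'⟩, h0, rfl⟩ := hδ
  dsimp only
  obtain ⟨Z, hZ, hmax⟩ := Finset.exists_max_image
    (Finset.univ.filter fun Z => Fib l u S (fun i => δ' i = 1) Z) (fun Z => ∑ j ∈ Z, α j)
    ⟨supp z0, by simpa using X_fib h0⟩
  simp only [Finset.mem_filter, Finset.mem_univ, true_and] at hZ hmax
  obtain ⟨z, hz, rfl⟩ := fib_X h0.2.1 hZ
  refine ⟨z, hz, fun α' hp w hw => ?_⟩
  rw [sum_supp hz.1, sum_supp hw.1]
  exact opt_pattern hS hp hZ hmax _ _ (X_fib hw) le_rfl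

def lin {n m : ℕ} (α : Fin n → ℝ) (β : Fin m → ℝ) : ((Fin n → ℝ) × (Fin m → ℝ)) →ₗ[ℝ] ℝ where
  toFun x := ∑ j, α j * x.1 j + ∑ i, β i * x.2 i
  map_add' x y := by
    simp only [Prod.fst_add, Prod.snd_add, Pi.add_apply, mul_add, Finset.sum_add_distrib]; ring
  map_smul' r x := by
    simp only [Prod.smul_fst, Prod.smul_snd, Pi.smul_apply, smul_eq_mul, RingHom.id_apply, mul_add,
      Finset.mul_sum]
    congr 1 <;> exact Finset.sum_congr rfl fun _ _ => by ring

theorem lin_apply {n m : ℕ} (α : Fin n → ℝ) (β : Fin m → ℝ) (x) :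
    lin α β x = ∑ j, α j * x.1 j + ∑ i, β i * x.2 i := rfl

theorem lin_exists {n m : ℕ} (f : ((Fin n → ℝ) × (Fin m → ℝ)) →ₗ[ℝ] ℝ) :
    ∃ α β, f = lin α β := by
  refine ⟨fun j => f (Pi.single j 1, 0), fun i => f (0, Pi.single i 1), ?_⟩
  apply LinearMap.prod_ext <;> apply LinearMap.pi_ext' <;> intro i <;> ext <;>
    simp [lin_apply, Pi.single_apply]

theorem main_ind {n m l u : ℕ} {S : Fin m → Finset (Fin n)} (hproper : ProperFam n m l u S)
    {F : Set ((Fin n → ℝ) × (Fin m → ℝ))} (hne : F.Nonempty)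
    (hdim : Module.finrank ℝ (affineSpan ℝ F).direction + 1 =
      Module.finrank ℝ (affineSpan ℝ (Xset n m l u S)).direction) :
    ∀ (N : ℕ) (α : Fin n → ℝ) (β : Fin m → ℝ) (c : ℝ), (lev α).card ≤ N →
      (∀ x ∈ Xset n m l u S, lin α β x ≤ c) →
      F = {x ∈ convexHull ℝ (Xset n m l u S) | lin α β x = c} →
      ∃ (αb : Fin n → ℝ) (βb : Fin m → ℝ) (γb : ℝ) (κ : ℝ),
      (∀ zd ∈ Xset n m l u S, lin αb βb zd ≤ γb) ∧
      F = {x ∈ convexHull ℝ (Xset n m l u S) | lin αb βb x = γb} ∧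
      (∀ j, αb j = 0 ∨ αb j = κ) := by
  obtain ⟨hS, D, hD, hDc, hDi⟩ := hproper
  intro N
  induction N with
  | zero =>
    intro α β c h
    simp [lev] at h
  | succ N ih =>
    intro α β c hN hval hFe
    by_cases h0 : ∀ j, α j = 0
    · exact ⟨α, β, c, 0, hval, hFe, fun j => Or.inl (h0 j)⟩
    push Not at h0
    obtain ⟨j0, hj0⟩ := h0
    obtain ⟨α', α'', κ, d1, d2, d3, d4, d5⟩ := decomp α j0 hj0
    have hmax := maximizer (l := l) (u := u) hS α
    have hmax' : ∀ δ, ∃ z, δ ∈ Dset n m l u S → (z, δ) ∈ Xset n m l u S ∧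
        ∀ α', FollowsPattern n α α' → ∀ w, (w, δ) ∈ Xset n m l u S →
        ∑ j, α' j * w j ≤ ∑ j, α' j * z j := fun δ => by
      by_cases h : δ ∈ Dset n m l u S
      · obtain ⟨z, hz⟩ := hmax δ h
        exact ⟨z, fun _ => hz⟩
      · exact ⟨0, fun h' => absurd h' h⟩
    choose zs hzs using hmax'
    obtain ⟨β', c', hβ⟩ := fun_affine D hDc hDi (fun δ => ∑ j, α' j * zs δ j)
    have hv1 : ∀ x ∈ Xset n m l u S, lin α' β' x ≤ c' := by
      rintro ⟨w, δ⟩ hx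
      have hδ : δ ∈ Dset n m l u S := ⟨_, hx, rfl⟩
      have a := (hzs δ hδ).2 α' d3 w hx
      have b := hβ δ (by rw [← hD] at hδ; exact hδ)
      simp only [lin_apply]
      linarith
    have hadd : lin α β = lin α' β' + lin α'' (fun i => β i - β' i) := by
      ext x <;> simp [lin_apply, d1, add_mul, sub_mul, Finset.sum_add_distrib]
    have hv2 : ∀ x ∈ Xset n m l u S, lin α'' (fun i => β i - β' i) x ≤ c - c' := by
      rintro ⟨w, δ⟩ hx
      have hδ : δ ∈ Dset n m l u S := ⟨_, hx, rfl⟩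
      have a := (hzs δ hδ).2 α'' d4 w hx
      have b := hβ δ (by rw [← hD] at hδ; exact hδ)
      have e := hval _ (hzs δ hδ).1
      rw [hadd, LinearMap.add_apply] at e
      simp only [lin_apply] at e ⊢
      linarith
    rcases face_lemma hadd (by ring : c = c' + (c - c')) hv1 hv2 hFe hne hdim with h | h
    · exact ⟨α', β', c', κ, hv1, h, d2⟩
    · refine ih α'' _ (c - c') (by omega) hv2 ?_
      rw [hFe]
      ext x
      refine and_congr_right fun hx => ?_
      have hx' : lin α' β' x = c' := span_eq h x (convexHull_subset_affineSpan _ hx)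
      rw [hadd, LinearMap.add_apply, hx']
      constructor <;> intro h <;> linarith

theorem stmt4 (n m l u : ℕ) (S : Fin m → Finset (Fin n))
    (hn : 0 < n) (hm : 0 < m) (hlu : l ≤ u) (hu : 2 ≤ u)
    (hdist : Function.Injective S)
    (hcard : ∀ i, 1 ≤ (S i).card ∧ (S i).card ≤ n - l)
    (hproper : ProperFam n m l u S)
    (F : Set ((Fin n → ℝ) × (Fin m → ℝ))) (hF : IsFacetSet (Xset n m l u S) F) :
    ∃ (αb : Fin n → ℝ) (βb : Fin m → ℝ) (γb : ℝ) (κ : ℝ),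
      (∀ zd ∈ Xset n m l u S, ∑ j, αb j * zd.1 j + ∑ i, βb i * zd.2 i ≤ γb) ∧
      F = {x ∈ convexHull ℝ (Xset n m l u S) |
            ∑ j, αb j * x.1 j + ∑ i, βb i * x.2 i = γb} ∧
      (∀ j, αb j = 0 ∨ αb j = κ) := by
  obtain ⟨f, c, hval, hFe, hdim⟩ := hF
  rcases F.eq_empty_or_nonempty with rfl | hne
  · refine ⟨0, 0, 1, 0, ?_, ?_, ?_⟩
    · intro zd _; simp
    · ext x; simp
    · intro j; simp
  obtain ⟨α, β, rfl⟩ := lin_exists f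
  exact main_ind hproper hne hdim _ α β c le_rfl hval hFe
end
end

section
/- The polytope conv(X^{l,u}) is full-dimensional; that is, the affine span of X^{l,u} is all of R^{n+m}. -/
open Finset

noncomputable section

def ptZ (n m : ℕ) (S : Fin m → Finset (Fin n)) (T : Finset (Fin n)) :
    (Fin n → ℝ) × (Fin m → ℝ) :=
  (fun j => if j ∈ T then 1 else 0, fun i => if Disjoint (S i) T then 1 else 0)

theorem ptZ_mem (n m l u : ℕ) (S : Fin m → Finset (Fin n)) (T : Finset (Fin n))
    (h1 : l ≤ T.card) (h2 : T.card ≤ u) : ptZ n m S T ∈ Xset n m l u S := by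
  refine ⟨fun j => ?_, fun i => ?_, fun i => ?_, ?_, ?_⟩
  · simp only [ptZ]; split_ifs <;> simp
  · simp only [ptZ]; split_ifs <;> simp
  · simp only [ptZ]
    split_ifs with h
    · symm
      apply Finset.prod_eq_one
      intro j hj
      rw [if_neg (Finset.disjoint_left.mp h hj)]; simp
    · rw [Finset.not_disjoint_iff] at h
      obtain ⟨a, ha, hb⟩ := h
      symm
      apply Finset.prod_eq_zero ha
      simp [hb]
  · simp [ptZ]; exact_mod_cast h1
  · simp [ptZ]; exact_mod_cast h2

theorem z_mem_of {n m : ℕ} (V : Submodule ℝ ((Fin n → ℝ) × (Fin m → ℝ)))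
    (h : ∀ j, ((Pi.single j 1, 0) : (Fin n → ℝ) × (Fin m → ℝ)) ∈ V) (z : Fin n → ℝ) :
    ((z, 0) : (Fin n → ℝ) × (Fin m → ℝ)) ∈ V := by
  have : ((z, 0) : (Fin n → ℝ) × (Fin m → ℝ)) =
      ∑ j, z j • ((Pi.single j 1, 0) : (Fin n → ℝ) × (Fin m → ℝ)) := by
    ext k
    · simp [Prod.fst_sum, Finset.sum_apply, Pi.single_apply]
    · simp [Prod.snd_sum, Finset.sum_apply]
  rw [this]
  exact V.sum_mem fun j _ => V.smul_mem _ (h j)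

theorem d_mem_of {n m : ℕ} (V : Submodule ℝ ((Fin n → ℝ) × (Fin m → ℝ)))
    (h : ∀ j, ((0, Pi.single j 1) : (Fin n → ℝ) × (Fin m → ℝ)) ∈ V) (z : Fin m → ℝ) :
    ((0, z) : (Fin n → ℝ) × (Fin m → ℝ)) ∈ V := by
  have : ((0, z) : (Fin n → ℝ) × (Fin m → ℝ)) =
      ∑ j, z j • ((0, Pi.single j 1) : (Fin n → ℝ) × (Fin m → ℝ)) := by
    ext k
    · simp [Prod.fst_sum, Finset.sum_apply]
    · simp [Prod.snd_sum, Finset.sum_apply, Pi.single_apply]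
  rw [this]
  exact V.sum_mem fun j _ => V.smul_mem _ (h j)

theorem stmt6 (n m l u : ℕ) (S : Fin m → Finset (Fin n))
    (hn : 0 < n) (hm : 0 < m) (hu : 2 ≤ u) (hlu : l < u)
    (hnested : ∀ i j : Fin m, i < j → S i ⊂ S j)
    (hS1 : 2 ≤ (SS n m S 1).card)
    (hSm : l ≤ n - (SS n m S m).card)
    :
    affineSpan ℝ (Xset n m l u S) = ⊤ := by
  have hS1' : 2 ≤ (S ⟨0, hm⟩).card := by
    have : SS n m S 1 = S ⟨0, hm⟩ := by
      simp only [SS]; rw [dif_pos ⟨le_refl 1, hm⟩]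
    rwa [this] at hS1
  have hSm' : l ≤ n - (S ⟨m - 1, by omega⟩).card := by
    have : SS n m S m = S ⟨m - 1, by omega⟩ := by
      simp only [SS]; rw [dif_pos ⟨hm, le_refl m⟩]
    rwa [this] at hSm
  clear hS1 hSm
  have hmono : ∀ i j : Fin m, i ≤ j → S i ⊆ S j := by
    intro i j hij
    rcases hij.eq_or_lt with h | h
    · rw [h]
    · exact (hnested i j h).1
  have hcardle : ∀ s : Finset (Fin n), s.card ≤ n := fun s => by
    simpa using Finset.card_le_univ s
  have hl2 : l + 2 ≤ n := by
    have h1 := Finset.card_le_card (hmono ⟨0, hm⟩ ⟨m - 1, by omega⟩ (by simp [Fin.le_def]))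
    have h2 := hcardle (S ⟨m - 1, by omega⟩)
    omega
  set V := vectorSpan ℝ (Xset n m l u S) with hV
  have hsub : ∀ T T' : Finset (Fin n), l ≤ T.card → T.card ≤ u → l ≤ T'.card → T'.card ≤ u →
      ptZ n m S T - ptZ n m S T' ∈ V := fun T T' a b c d =>
    vsub_mem_vectorSpan ℝ (ptZ_mem n m l u S T a b) (ptZ_mem n m l u S T' c d)
  -- sets meeting S_1
  have hmeet : ∀ (T : Finset (Fin n)) (k : Fin n), k ∈ S ⟨0, hm⟩ → k ∈ T →
      ∀ i, ¬ Disjoint (S i) T := by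
    intro T k hk hkT i
    rw [Finset.not_disjoint_iff]
    exact ⟨k, hmono _ i (by simp [Fin.le_def]) hk, hkT⟩
  have hE : ∀ j, ∃ T : Finset (Fin n), j ∉ T ∧ T.card = max l 1 ∧ ∃ k ∈ S ⟨0, hm⟩, k ∈ T := by
    intro j
    obtain ⟨k, hk, hkj⟩ := Finset.exists_mem_ne (by omega : 1 < (S ⟨0, hm⟩).card) j
    obtain ⟨T, h1, h2, h3⟩ := Finset.exists_subsuperset_card_eq
      (s := {k}) (t := Finset.univ.erase j) (n := max l 1) (by simpa using hkj) (by simp)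
      (by rw [Finset.card_erase_of_mem (Finset.mem_univ j)]; simp; omega)
    refine ⟨T, fun h => ?_, h3, k, hk, h1 (by simp)⟩
    simpa using h2 h
  have hz1 : ∀ j, ((Pi.single j 1, 0) : (Fin n → ℝ) × (Fin m → ℝ)) ∈ V := by
    intro j
    obtain ⟨T, hj, hc, k, hk, hkT⟩ := hE j
    have hc' := Finset.card_insert_of_notMem hj
    have := hsub (insert j T) T (by omega) (by omega) (by omega) (by omega)
    convert this using 1
    ext a
    · by_cases haj : a = j
      · subst haj; simp [ptZ, hj]
      · simp [ptZ, haj]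
    · simp only [ptZ, Prod.snd_sub, Pi.sub_apply]
      rw [if_neg (hmeet T k hk hkT a), if_neg (hmeet (insert j T) k hk (by simp [hkT]) a)]
      simp
  have hz := z_mem_of V hz1
  have hT : ∀ i : Fin m, ∃ T : Finset (Fin n), l ≤ T.card ∧ T.card ≤ u ∧ Disjoint (S i) T ∧
      ∀ k, i < k → ¬ Disjoint (S k) T := by
    intro i
    by_cases hi : i.1 + 1 < m
    · obtain ⟨a, ha, hai⟩ := Finset.exists_of_ssubset
        (hnested i ⟨i.1 + 1, hi⟩ (by simp [Fin.lt_def]))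
      have hlt := Finset.card_lt_card (hnested i ⟨i.1 + 1, hi⟩ (by simp [Fin.lt_def]))
      have hle := Finset.card_le_card (hmono ⟨i.1 + 1, hi⟩ ⟨m - 1, by omega⟩
        (by simp only [Fin.le_def]; omega))
      have h2 := hcardle (S ⟨m - 1, by omega⟩)
      obtain ⟨T, h1, h2, h3⟩ := Finset.exists_subsuperset_card_eq
        (s := {a}) (t := (S i)ᶜ) (n := max l 1) (by simpa using hai) (by simp)
        (by rw [Finset.card_compl, Fintype.card_fin]; omega)
      refine ⟨T, by omega, by omega, ?_, fun k hk => ?_⟩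
      · rw [Finset.disjoint_left]
        intro x hx hxT
        have := h2 hxT
        simp [hx] at this
      · rw [Finset.not_disjoint_iff]
        exact ⟨a, hmono ⟨i.1 + 1, hi⟩ k (by simp only [Fin.le_def, Fin.lt_def] at *; omega) ha,
          h1 (by simp)⟩
    · have him : i = ⟨m - 1, by omega⟩ := by ext; have := i.2; simp; omega
      obtain ⟨T, h2, h3⟩ := Finset.exists_subset_card_eq (s := (S i)ᶜ) (n := l)
        (by rw [Finset.card_compl, Fintype.card_fin, him]; exact hSm')
      refine ⟨T, by omega, by omega, ?_, fun k hk => ?_⟩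
      · rw [Finset.disjoint_left]
        intro x hx hxT
        have := h2 hxT
        simp [hx] at this
      · exfalso; have := k.2; simp only [Fin.lt_def] at hk; omega
  have hd0 : ∀ i : Fin m,
      ((0, fun k => if k ≤ i then 1 else 0) : (Fin n → ℝ) × (Fin m → ℝ)) ∈ V := by
    intro i
    obtain ⟨T, h1, h2, h3, h4⟩ := hT i
    obtain ⟨T', hj, hc, k, hk, hkT⟩ := hE ⟨0, hn⟩
    have key := V.sub_mem (hsub T T' h1 h2 (by omega) (by omega))
      (hz ((ptZ n m S T).1 - (ptZ n m S T').1))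
    convert key using 1
    ext a
    · simp
    · simp only [ptZ, Prod.snd_sub, Pi.sub_apply]
      rw [if_neg (hmeet T' k hk hkT a)]
      by_cases hai : a ≤ i
      · rw [if_pos hai, if_pos (Finset.disjoint_of_subset_left (hmono a i hai) h3)]; simp
      · rw [if_neg hai, if_neg (h4 a (not_le.mp hai))]; simp
  have hd1 : ∀ i, ((0, Pi.single i 1) : (Fin n → ℝ) × (Fin m → ℝ)) ∈ V := by
    intro i
    by_cases hi : i.1 = 0
    · convert hd0 i using 2
      ext a
      simp only [Pi.single_apply, Fin.le_def, Fin.ext_iff, hi, Nat.le_zero]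
    · convert V.sub_mem (hd0 i) (hd0 ⟨i.1 - 1, by omega⟩) using 1
      ext a
      · simp
      · simp only [Pi.single_apply, Fin.le_def, Fin.ext_iff, Prod.snd_sub, Pi.sub_apply]
        split_ifs <;> first | omega | simp
  have hd := d_mem_of V hd1
  have hVtop : V = ⊤ := by
    rw [eq_top_iff]
    rintro ⟨z, d⟩ -
    simpa using V.add_mem (hz z) (hd d)
  obtain ⟨T', hj, hc, -⟩ := hE ⟨0, hn⟩
  have hne : (Xset n m l u S).Nonempty :=
    ⟨_, ptZ_mem n m l u S T' (by omega) (by omega)⟩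
  exact (AffineSubspace.affineSpan_eq_top_iff_vectorSpan_eq_top_of_nonempty ℝ _ _ hne).2 hVtop
end
end
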